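/- arXiv:0912.0904 — 4 statements merged into one kernel-verified Lean document; each statement's English description precedes it below -/
import Mathlib

section
/- Let m ≥ 1, let c₁, …, c_m be positive reals, and define N : ℂᵐ → ℝ by N(w) = π·Σⱼ cⱼ|wⱼ|². Let A₁, A₂ : ℝ → ℝ be smooth functions such that the set C := {x ∈ ℝ : x ≥ 0, A₁(x) ≥ 0 and A₂(x) ≥ 0} is compact. Let U be an open subset of ℂ × ℂᵐ containing the (compact) set {(z, w) : N(w) ∈ C and π|z|² ≤ A₁(N(w)) + A₂(N(w))}. Then there exist a smooth time-dependent function G : ℝ × (ℂ × ℂᵐ) → ℝ and a compact set K ⊆ U with G t = 0 outside K for every t, together with a Hamiltonian flow b of G with b 0 = id, such that: (i) N(w-component of b t (z, w)) = N(w) for all t, z, w (the flow preserves the function (z, w) ↦ N(w)); and (ii) the image under b 1 of the set {(z, w) : π|z|² ≤ A₁(N(w))} is disjoint from the set {(z, w) : π|z|² ≤ A₂(N(w))}. -/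
open Real

/-!
The Hamiltonian `G` is a function of `(N w, z)` and the time. Its flow therefore preserves `N`, and
on each level `N = n` the `z`-component follows a planar Hamiltonian flow; so it suffices to
displace discs in the plane by Hamiltonians depending smoothly on `n`.

An isotopy `Q t` of increasing functions of the line lifts to the Hamiltonian flow of
`y * (∂ₜQ / ∂ᵤQ)`, along which `(Q t x, y / (Q t)' x)` is conserved. Let `S r` be a primitive of (a
smooth majorant of) the half-height `√(r² - x²)` of the disc of radius `r`, with range
`(-r²θ, r²θ)` over the disc, and let `ρ² = a² + b²`. The isotopy runs from `S a` through
`S ρ - b²θ` to `S b - (a² + b²)θ`. An orbit starting in the disc of radius `a` cannot leave the disc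
of radius `√(1 + δ) ρ` before time `1 / 2`, and an orbit ending in the disc of radius `b` cannot
have been outside of it after time `1 / 2`; hence the Hamiltonian may be cut off outside that disc.
The first conserved quantity lies in `(-a²θ, a²θ)` for the former orbits and in
`(-(a² + 2b²)θ, -a²θ)` for the latter, so no orbit is of both kinds.
-/

open scoped ContDiff Topology NNReal

section GlobalFlow

variable {E : Type*} [NormedAddCommGroup E] [NormedSpace ℝ E] [CompleteSpace E]
  {V : ℝ → E → E} {K L : ℝ≥0}

theorem exists_hasDerivAt_Ioo_of_lipschitz_of_bounded
    (hlip : ∀ t, LipschitzWith K (V t)) (hcont : ∀ x, Continuous fun t => V t x)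
    (hbound : ∀ t x, ‖V t x‖ ≤ L) (x₀ : E) {a : ℝ} (ha : 0 ≤ a) :
    ∃ γ : ℝ → E, γ 0 = x₀ ∧ ∀ t ∈ Set.Ioo (-a) a, HasDerivAt γ (V t (γ t)) t := by
  have picardLindelof : IsPicardLindelof V (tmin := -a) (tmax := a)
      ⟨0, neg_nonpos.2 ha, ha⟩ x₀ (L * a.toNNReal) 0 L K :=
    { lipschitzOnWith := fun t _ => (hlip t).lipschitzOnWith
      continuousOn := fun x _ => (hcont x).continuousOn
      norm_le := fun t _ x _ => hbound t x
      mul_max_le := by simp [ha] }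
  obtain ⟨γ, hγ₀, hγ⟩ := picardLindelof.exists_eq_forall_mem_Icc_hasDerivWithinAt₀
  exact ⟨γ, hγ₀, fun t ht =>
    (hγ t (Set.Ioo_subset_Icc_self ht)).hasDerivAt (Icc_mem_nhds ht.1 ht.2)⟩

theorem exists_isIntegralCurve_of_lipschitz_of_bounded
    (hlip : ∀ t, LipschitzWith K (V t)) (hcont : ∀ x, Continuous fun t => V t x)
    (hbound : ∀ t x, ‖V t x‖ ≤ L) (x₀ : E) : ∃ γ : ℝ → E, γ 0 = x₀ ∧ IsIntegralCurve γ V := by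
  choose! γ hγ₀ hγ using fun (a : ℝ) (ha : 0 ≤ a) =>
    exists_hasDerivAt_Ioo_of_lipschitz_of_bounded hlip hcont hbound x₀ ha
  have eqOn {a b : ℝ} (ha : 0 < a) (hab : a ≤ b) : Set.EqOn (γ a) (γ b) (Set.Ioo (-a) a) :=
    ODE_solution_unique_of_mem_Ioo (fun t _ => (hlip t).lipschitzOnWith (s := Set.univ))
      (t₀ := 0) ⟨neg_lt_zero.2 ha, ha⟩ (fun t ht => ⟨hγ a ha.le t ht, trivial⟩)
      (fun t ht => ⟨hγ b (ha.le.trans hab) t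
        ⟨(neg_le_neg hab).trans_lt ht.1, ht.2.trans_le hab⟩, trivial⟩)
      (by rw [hγ₀ a ha.le, hγ₀ b (ha.le.trans hab)])
  refine ⟨fun t => γ (|t| + 1) t, hγ₀ _ (by positivity), fun t => ?_⟩
  have eventuallyEq : (fun s => γ (|s| + 1) s) =ᶠ[𝓝 t] γ (|t| + 2) := by
    have near : ∀ᶠ s in 𝓝 t, |s| < |t| + 1 :=
      continuous_abs.continuousAt.eventually_lt continuousAt_const (lt_add_one _)
    filter_upwards [near] with s hs
    exact eqOn (by positivity) (by linarith) (abs_lt.1 (lt_add_one _))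
  beta_reduce
  rw [eventuallyEq.eq_of_nhds]
  exact (hγ _ (by positivity) t (abs_lt.1 (by linarith))).congr_of_eventuallyEq eventuallyEq

end GlobalFlow

section HamiltonianFlow

variable {E : Type*} [NormedAddCommGroup E] [InnerProductSpace ℝ E] [CompleteSpace E]
  [Module ℂ E]

/-- The vector field `I • ∇(G t)` of a time-dependent Hamiltonian `G` on a complex vector space
carrying a real inner product; on `ℂᴺ` with `Re ∑ uⱼ v̄ⱼ` this is the usual Hamiltonian vector field
for `∑ dxⱼ ∧ dyⱼ`. -/
noncomputable def hamiltonianVectorField (G : ℝ × E → ℝ) (t : ℝ) (v : E) : E :=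
  Complex.I • gradient (fun w => G (t, w)) v

variable {G : ℝ × E → ℝ}

theorem hamiltonianVectorField_eq_zero_of_notMem_tsupport {t : ℝ} {v : E}
    (h : (t, v) ∉ tsupport G) : hamiltonianVectorField G t v = 0 := by
  have vanishes : (fun w => G (t, w)) =ᶠ[𝓝 v] fun _ => 0 :=
    (notMem_tsupport_iff_eventuallyEq.1 h).comp_tendsto (Continuous.prodMk_right t).continuousAt
  rw [hamiltonianVectorField, vanishes.gradient_eq, gradient_fun_const, smul_zero]

theorem contDiff_hamiltonianVectorField [ContinuousConstSMul ℂ E] [SMulCommClass ℝ ℂ E]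
    (hG : ContDiff ℝ ∞ G) : ContDiff ℝ ∞ fun p : ℝ × E => hamiltonianVectorField G p.1 p.2 := by
  have fderiv_smooth : ContDiff ℝ ∞ fun p : ℝ × E => fderiv ℝ (fun w => G (p.1, w)) p.2 :=
    ContDiff.fderiv (f := fun p w => G (p.1, w)) (by fun_prop) contDiff_snd (by simp)
  exact ((InnerProductSpace.toDual ℝ E).symm.contDiff.comp fderiv_smooth).const_smul Complex.I

theorem exists_isIntegralCurve_hamiltonianVectorField [ContinuousConstSMul ℂ E]
    [SMulCommClass ℝ ℂ E] (hG : ContDiff ℝ ∞ G) (hGc : HasCompactSupport G) (v : E) :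
    ∃ γ : ℝ → E, γ 0 = v ∧ IsIntegralCurve γ (hamiltonianVectorField G) := by
  have smooth := contDiff_hamiltonianVectorField hG
  have compactSupport : HasCompactSupport fun p : ℝ × E => hamiltonianVectorField G p.1 p.2 :=
    HasCompactSupport.intro hGc fun p hp => hamiltonianVectorField_eq_zero_of_notMem_tsupport hp
  obtain ⟨K, hK⟩ := smooth.lipschitzWith_of_hasCompactSupport compactSupport (by simp)
  obtain ⟨L, hL⟩ := compactSupport.exists_bound_of_continuous smooth.continuous
  refine exists_isIntegralCurve_of_lipschitz_of_bounded (K := K * 1) (L := L.toNNReal)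
    (fun t => hK.comp (LipschitzWith.prodMk_left t)) (fun w => smooth.continuous.comp (by fun_prop))
    (fun t w => (hL (t, w)).trans (Real.le_coe_toNNReal L)) v

end HamiltonianFlow

section TwoVariables

variable {F : Type*} [NormedAddCommGroup F] [NormedSpace ℝ F] {f : ℝ → ℝ → F} {t u : ℝ}

theorem hasDerivAt_along_curve_fderiv {x y : ℝ → ℝ} {x' y' : ℝ} {g : ℝ × ℝ → F}
    (hg : DifferentiableAt ℝ g (x t, y t)) (hx : HasDerivAt x x' t) (hy : HasDerivAt y y' t) :
    HasDerivAt (fun s => g (x s, y s)) (fderiv ℝ g (x t, y t) (x', y')) t :=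
  hg.hasFDerivAt.comp_hasDerivAt t (hx.prodMk hy)

theorem deriv_left_eq_fderiv_uncurry (hf : DifferentiableAt ℝ ↿f (t, u)) :
    deriv (fun s => f s u) t = fderiv ℝ ↿f (t, u) (1, 0) :=
  (hasDerivAt_along_curve_fderiv hf (hasDerivAt_id' t) (hasDerivAt_const t u)).deriv

theorem deriv_right_eq_fderiv_uncurry (hf : DifferentiableAt ℝ ↿f (t, u)) :
    deriv (f t) u = fderiv ℝ ↿f (t, u) (0, 1) :=
  (hasDerivAt_along_curve_fderiv hf (hasDerivAt_const u t) (hasDerivAt_id' u)).deriv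

theorem hasDerivAt_along_curve {x : ℝ → ℝ} {x' : ℝ} (hf : DifferentiableAt ℝ ↿f (t, x t))
    (hx : HasDerivAt x x' t) :
    HasDerivAt (fun s => f s (x s)) (deriv (fun s => f s (x t)) t + x' • deriv (f t) (x t)) t := by
  rw [deriv_left_eq_fderiv_uncurry hf, deriv_right_eq_fderiv_uncurry hf, ← map_smul, ← map_add]
  refine (hasDerivAt_along_curve_fderiv hf (hasDerivAt_id' t) hx).congr_deriv ?_
  simp

theorem deriv_deriv_comm (hf : ContDiff ℝ 2 ↿f) :
    deriv (fun u => deriv (fun s => f s u) t) u = deriv (fun s => deriv (f s) u) t := by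
  have hf₁ : Differentiable ℝ ↿f := hf.differentiable (by simp)
  have hf₂ (v : ℝ × ℝ) : Differentiable ℝ (fun p => fderiv ℝ ↿f p v) :=
    ((hf.fderiv_right (m := 1) (by norm_num)).clm_apply contDiff_const).differentiable (by simp)
  have snd (p v w : ℝ × ℝ) :
      fderiv ℝ (fun p => fderiv ℝ ↿f p v) p w = fderiv ℝ (fderiv ℝ ↿f) p w v := by
    rw [fderiv_clm_apply ((hf.fderiv_right (m := 1) (by norm_num)).differentiable (by simp) p)
      (by fun_prop)]
    simp
  have symm : IsSymmSndFDerivAt ℝ ↿f (t, u) := hf.contDiffAt.isSymmSndFDerivAt (by simp)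
  simp only [deriv_left_eq_fderiv_uncurry (hf₁ _), deriv_right_eq_fderiv_uncurry (hf₁ _)]
  have du := hasDerivAt_along_curve_fderiv (hf₂ (1, 0) _) (hasDerivAt_const u t) (hasDerivAt_id' u)
  have dt := hasDerivAt_along_curve_fderiv (hf₂ (0, 1) _) (hasDerivAt_id' t) (hasDerivAt_const t u)
  rw [du.deriv, dt.deriv, snd, snd, symm.eq]

theorem contDiff_deriv_of_uncurry {X : Type*} [NormedAddCommGroup X] [NormedSpace ℝ X]
    {g : X → ℝ → F} {u : X → ℝ} (hg : ContDiff ℝ ∞ ↿g) (hu : ContDiff ℝ ∞ u) :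
    ContDiff ℝ ∞ fun x => deriv (g x) (u x) := by
  simp only [← fderiv_apply_one_eq_deriv]
  exact ContDiff.fderiv_apply hg hu contDiff_const (by simp)

theorem contDiff_deriv_left (hf : ContDiff ℝ ∞ ↿f) :
    ContDiff ℝ ∞ ↿fun t u => deriv (fun s => f s u) t :=
  contDiff_deriv_of_uncurry (g := fun (p : ℝ × ℝ) s => f s p.2) (by fun_prop) contDiff_fst

theorem contDiff_deriv_right (hf : ContDiff ℝ ∞ ↿f) : ContDiff ℝ ∞ ↿fun t => deriv (f t) :=
  contDiff_deriv_of_uncurry (g := fun p : ℝ × ℝ => f p.1) (by fun_prop) contDiff_snd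

end TwoVariables

section LocallyConstant

theorem eq_of_isPreconnected_of_eventuallyEq {X Y : Type*} [TopologicalSpace X]
    [TopologicalSpace Y] [T1Space Y] {f : X → Y} {s : Set X} {x₀ x : X} (hs : IsPreconnected s)
    (hf : Continuous f) (hlocal : ∀ x ∈ s, f x = f x₀ → f =ᶠ[𝓝 x] fun _ => f x₀)
    (hx₀ : x₀ ∈ s) (hx : x ∈ s) : f x = f x₀ := by
  have subset_interior : s ⊆ interior (f ⁻¹' {f x₀}) := by
    refine hs.subset_of_closure_inter_subset isOpen_interior
      ⟨x₀, hx₀, mem_interior_iff_mem_nhds.2 (hlocal x₀ hx₀ rfl)⟩ ?_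
    rintro y ⟨hy, hys⟩
    have hfy : f y = f x₀ :=
      closure_minimal interior_subset (isClosed_singleton.preimage hf) hy
    exact mem_interior_iff_mem_nhds.2 (hlocal y hys hfy)
  have hx' : x ∈ f ⁻¹' {f x₀} := interior_subset (subset_interior hx)
  exact hx'

theorem eventuallyEq_const_of_eventually_hasDerivAt_zero {E : Type*} [NormedAddCommGroup E]
    [NormedSpace ℝ E] {f : ℝ → E} {t : ℝ} (hf : ∀ᶠ s in 𝓝 t, HasDerivAt f 0 s) :
    f =ᶠ[𝓝 t] fun _ => f t := by
  obtain ⟨ε, hε, hball⟩ := Metric.eventually_nhds_iff_ball.1 hf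
  filter_upwards [Metric.ball_mem_nhds t hε] with s hs
  exact Metric.isOpen_ball.is_const_of_deriv_eq_zero (convex_ball t ε).isPreconnected
    (fun r hr => (hball r hr).differentiableAt.differentiableWithinAt)
    (fun r hr => (hball r hr).deriv) hs (Metric.mem_ball_self hε)

end LocallyConstant

section CotangentLift

/-- The cotangent lift `(x, y) ↦ (f x, y / f' x)` of a map `f` of the line, with `ℂ` in the role of
the cotangent bundle `T*ℝ`: the real part is the base point and the imaginary part the covector. -/
noncomputable def cotangentLift (f : ℝ → ℝ) (z : ℂ) : ℝ × ℝ :=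
  (f z.re, z.im / deriv f z.re)

/-- The Hamiltonian on `ℝ × ℂ` generated by an isotopy `Q t` of the line: it is linear in the fibres
of `T*ℝ = ℂ`, and its flow covers the isotopy `(Q t)⁻¹ ∘ Q 0`. -/
noncomputable def liftHamiltonian (Q : ℝ → ℝ → ℝ) (p : ℝ × ℂ) : ℝ :=
  p.2.im * (deriv (fun s => Q s p.2.re) p.1 / deriv (Q p.1) p.2.re)

theorem cotangentLift_sub_const (f : ℝ → ℝ) (c : ℝ) (z : ℂ) :
    cotangentLift (fun u => f u - c) z = cotangentLift f z - (c, 0) := by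
  simp [cotangentLift]

theorem hasGradientAt_im_mul_comp_re {R : ℝ → ℝ} {z : ℂ} (hR : DifferentiableAt ℝ R z.re) :
    HasGradientAt (fun w : ℂ => w.im * R w.re) ⟨z.im * deriv R z.re, R z.re⟩ z := by
  rw [hasGradientAt_iff_hasFDerivAt]
  have := Complex.imCLM.hasFDerivAt (x := z) |>.mul
    (hR.hasDerivAt.hasFDerivAt.comp z (Complex.reCLM.hasFDerivAt (x := z)))
  refine this.congr_fderiv ?_
  ext w
  simp only [add_apply, smul_apply, ContinuousLinearMap.comp_apply, Complex.imCLM_apply,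
    Complex.reCLM_apply, ContinuousLinearMap.toSpanSingleton_apply, smul_eq_mul,
    InnerProductSpace.toDual_apply_apply, Complex.inner, Complex.mul_re, Complex.conj_re,
    Complex.conj_im, Function.comp_apply]
  ring

theorem contDiff_liftHamiltonian_of_uncurry {X : Type*} [NormedAddCommGroup X] [NormedSpace ℝ X]
    {Q : X → ℝ → ℝ → ℝ} (hQ : ContDiff ℝ ∞ ↿Q) (hQ' : ∀ x t u, deriv (Q x t) u ≠ 0) :
    ContDiff ℝ ∞ ↿fun x => liftHamiltonian (Q x) := by
  have smooth_re : ContDiff ℝ ∞ fun q : X × ℝ × ℂ => q.2.2.re :=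
    Complex.reCLM.contDiff.comp (by fun_prop)
  have smooth_im : ContDiff ℝ ∞ fun q : X × ℝ × ℂ => q.2.2.im :=
    Complex.imCLM.contDiff.comp (by fun_prop)
  have smooth_dt : ContDiff ℝ ∞ fun q : X × ℝ × ℂ => deriv (fun s => Q q.1 s q.2.2.re) q.2.1 :=
    contDiff_deriv_of_uncurry (g := fun (q : X × ℝ × ℂ) s => Q q.1 s q.2.2.re)
      (hQ.comp (contDiff_fst.fst.prodMk (contDiff_snd.prodMk (smooth_re.comp contDiff_fst))))
      (by fun_prop)
  have smooth_du : ContDiff ℝ ∞ fun q : X × ℝ × ℂ => deriv (Q q.1 q.2.1) q.2.2.re :=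
    contDiff_deriv_of_uncurry (g := fun q : X × ℝ × ℂ => Q q.1 q.2.1)
      (hQ.comp (f := fun q : (X × ℝ × ℂ) × ℝ => (q.1.1, q.1.2.1, q.2)) (by fun_prop)) smooth_re
  exact smooth_im.mul (smooth_dt.div smooth_du fun q => hQ' _ _ _)

variable {Q : ℝ → ℝ → ℝ} {z : ℝ → ℂ} {t t₀ u : ℝ}

theorem contDiff_deriv_div_deriv (hQ : ContDiff ℝ ∞ ↿Q) (hQ' : ∀ t u, deriv (Q t) u ≠ 0) :
    ContDiff ℝ ∞ fun u => deriv (fun s => Q s u) t / deriv (Q t) u :=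
  ((contDiff_deriv_left hQ).comp (contDiff_prodMk_right t)).div
    ((contDiff_deriv_right hQ).comp (contDiff_prodMk_right t)) (hQ' t)

theorem hamiltonianVectorField_liftHamiltonian {z : ℂ} (hQ : ContDiff ℝ ∞ ↿Q)
    (hQ' : ∀ t u, deriv (Q t) u ≠ 0) :
    hamiltonianVectorField (liftHamiltonian Q) t z =
      ⟨-(deriv (fun s => Q s z.re) t / deriv (Q t) z.re),
        z.im * deriv (fun u => deriv (fun s => Q s u) t / deriv (Q t) u) z.re⟩ := by
  have hasGradientAt : HasGradientAt (fun w => liftHamiltonian Q (t, w)) _ z :=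
    hasGradientAt_im_mul_comp_re ((contDiff_deriv_div_deriv hQ hQ').differentiable (by simp) _)
  rw [hamiltonianVectorField, hasGradientAt.gradient]
  apply Complex.ext <;> simp

theorem deriv_deriv_eq_of_transport (hQ : ContDiff ℝ ∞ ↿Q) (hQ' : ∀ t u, deriv (Q t) u ≠ 0) :
    deriv (fun s => deriv (Q s) u) t =
      deriv (fun u => deriv (fun s => Q s u) t / deriv (Q t) u) u * deriv (Q t) u +
        deriv (fun s => Q s u) t / deriv (Q t) u * deriv (deriv (Q t)) u := by
  have dR := (contDiff_deriv_div_deriv (t := t) hQ hQ').differentiable (by simp) u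
  have dQ' : DifferentiableAt ℝ (deriv (Q t)) u :=
    ((contDiff_deriv_right hQ).comp (contDiff_prodMk_right t)).differentiable (by simp) u
  rw [← deriv_deriv_comm (hQ.of_le (by norm_cast)), ← deriv_fun_mul dR dQ']
  simp only [div_mul_cancel₀ _ (hQ' t _)]

theorem hasDerivAt_cotangentLift_zero (hQ : ContDiff ℝ ∞ ↿Q) (hQ' : ∀ t u, deriv (Q t) u ≠ 0)
    (hz : HasDerivAt z (hamiltonianVectorField (liftHamiltonian Q) t (z t)) t) :
    HasDerivAt (fun s => cotangentLift (Q s) (z s)) 0 t := by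
  rw [hamiltonianVectorField_liftHamiltonian hQ hQ'] at hz
  have hre := Complex.reCLM.hasFDerivAt.comp_hasDerivAt t hz
  have him := Complex.imCLM.hasFDerivAt.comp_hasDerivAt t hz
  have base := hasDerivAt_along_curve (hQ.differentiable (by simp) _) hre
  have slope := hasDerivAt_along_curve ((contDiff_deriv_right hQ).differentiable (by simp) _) hre
  have hne := hQ' t (z t).re
  refine (base.prodMk (him.div slope hne)).congr_deriv (Prod.ext ?_ ?_)
  · simp [neg_mul, div_mul_cancel₀ _ hne]
  · simp only [Function.comp_apply, Complex.reCLM_apply, Complex.imCLM_apply, smul_eq_mul,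
      deriv_deriv_eq_of_transport hQ hQ', Prod.snd_zero]
    ring

theorem cotangentLift_eq_of_mem (hQ : ContDiff ℝ ∞ ↿Q) (hQ' : ∀ t u, deriv (Q t) u ≠ 0)
    (hz : Continuous z) {W : Set ℂ} (hW : IsOpen W)
    (hode : ∀ t, z t ∈ W → HasDerivAt z (hamiltonianVectorField (liftHamiltonian Q) t (z t)) t)
    {J : Set ℝ} (hJ : IsPreconnected J) (ht₀ : t₀ ∈ J) (ht : t ∈ J)
    (hconf : ∀ s ∈ J, ∀ w, cotangentLift (Q s) w = cotangentLift (Q t₀) (z t₀) → w ∈ W) :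
    cotangentLift (Q t) (z t) = cotangentLift (Q t₀) (z t₀) := by
  have continuous_base : Continuous fun s => (s, (z s).re) := by fun_prop
  have continuous_lift : Continuous fun s => cotangentLift (Q s) (z s) :=
    (hQ.continuous.comp continuous_base).prodMk ((Complex.continuous_im.comp hz).div
      ((contDiff_deriv_right hQ).continuous.comp continuous_base) fun s => hQ' s _)
  refine eq_of_isPreconnected_of_eventuallyEq hJ continuous_lift (fun s hs heq => ?_) ht₀ ht
  rw [← heq]
  apply eventuallyEq_const_of_eventually_hasDerivAt_zero
  filter_upwards [hz.continuousAt.preimage_mem_nhds (hW.mem_nhds (hconf s hs _ heq))] with r hr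
  exact hasDerivAt_cotangentLift_zero hQ hQ' (hode r hr)

end CotangentLift

section SmoothPosPart

variable {ε a : ℝ}

/-- A smooth strict majorant of the positive part `max a 0`, exceeding it by at most `ε`. -/
noncomputable def smoothPosPart (ε a : ℝ) : ℝ := (a + √(a ^ 2 + ε ^ 2)) / 2

theorem max_zero_lt_smoothPosPart (hε : 0 < ε) : max a 0 < smoothPosPart ε a := by
  have abs_lt_sqrt : |a| < √(a ^ 2 + ε ^ 2) := Real.lt_sqrt_of_sq_lt (by rw [sq_abs]; simp [hε])
  unfold smoothPosPart
  grind

theorem smoothPosPart_pos (hε : 0 < ε) : 0 < smoothPosPart ε a :=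
  (le_max_right a 0).trans_lt (max_zero_lt_smoothPosPart hε)

theorem smoothPosPart_le (hε : 0 ≤ ε) : smoothPosPart ε a ≤ max a 0 + ε := by
  have sqrt_le : √(a ^ 2 + ε ^ 2) ≤ |a| + ε :=
    Real.sqrt_le_iff.2 ⟨by positivity, by nlinarith [sq_abs a, mul_nonneg (abs_nonneg a) hε]⟩
  unfold smoothPosPart
  grind

theorem contDiff_smoothPosPart (hε : ε ≠ 0) : ContDiff ℝ ∞ (smoothPosPart ε) := by
  have smooth_sqrt : ContDiff ℝ ∞ fun a : ℝ => √(a ^ 2 + ε ^ 2) :=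
    ContDiff.sqrt (by fun_prop) fun a => by positivity
  exact (contDiff_id.add smooth_sqrt).div_const 2

end SmoothPosPart

section DiscArea

variable {δ r ρ σ u w x : ℝ} {z : ℂ}

/-- The half-height `√(1 - x ^ 2)` of the unit disc over `x`, smoothed and made slightly larger. -/
noncomputable def halfHeight (δ x : ℝ) : ℝ := √(smoothPosPart δ (1 - x ^ 2))

/-- The area under `halfHeight δ` between the abscissae `0` and `x`. -/
noncomputable def halfArea (δ x : ℝ) : ℝ := ∫ s in (0 : ℝ)..x, halfHeight δ s

/-- `halfArea` for the disc of radius `r`. Its cotangent lift carries this disc into the rectangle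
of half-width `r ^ 2 * halfArea δ 1` and half-height `1`. -/
noncomputable def discArea (δ r u : ℝ) : ℝ := r ^ 2 * halfArea δ (u / r)

theorem halfHeight_pos (hδ : 0 < δ) : 0 < halfHeight δ x :=
  Real.sqrt_pos.2 (smoothPosPart_pos hδ)

theorem contDiff_halfHeight (hδ : 0 < δ) : ContDiff ℝ ∞ (halfHeight δ) :=
  ((contDiff_smoothPosPart hδ.ne').comp (by fun_prop)).sqrt fun _ => (smoothPosPart_pos hδ).ne'

theorem lt_mul_halfHeight (hδ : 0 < δ) (hr : 0 < r) (h : ‖z‖ < r) :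
    |z.im| < r * halfHeight δ (z.re / r) := by
  have disc : z.im ^ 2 < r ^ 2 * (1 - (z.re / r) ^ 2) := by
    have := pow_lt_pow_left₀ h (norm_nonneg z) two_ne_zero
    rw [Complex.sq_norm, Complex.normSq_apply] at this
    field_simp
    linarith
  refine abs_lt_of_sq_lt_sq (disc.trans ?_) (mul_nonneg hr.le (halfHeight_pos hδ).le)
  rw [mul_pow, halfHeight, Real.sq_sqrt (smoothPosPart_pos hδ).le]
  gcongr
  exact (le_max_left _ _).trans_lt (max_zero_lt_smoothPosPart hδ)

theorem mul_halfHeight_sq_le (hδ : 0 < δ) (hr : 0 < r) (hrρ : r ≤ ρ) (hu : |u| ≤ ρ) :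
    (r * halfHeight δ (u / r)) ^ 2 ≤ (1 + δ) * ρ ^ 2 - u ^ 2 := by
  have hrρ₂ : r ^ 2 ≤ ρ ^ 2 := by gcongr
  have hu₂ : u ^ 2 ≤ ρ ^ 2 := sq_le_sq.2 (hu.trans (le_abs_self ρ))
  have max_le : r ^ 2 * max (1 - (u / r) ^ 2) 0 ≤ ρ ^ 2 - u ^ 2 := by
    rw [mul_max_of_nonneg _ _ (sq_nonneg r)]
    refine max_le ?_ (by linarith)
    field_simp
    linarith
  rw [mul_pow, halfHeight, Real.sq_sqrt (smoothPosPart_pos hδ).le]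
  calc r ^ 2 * smoothPosPart δ (1 - (u / r) ^ 2)
      ≤ r ^ 2 * (max (1 - (u / r) ^ 2) 0 + δ) := by gcongr; exact smoothPosPart_le hδ.le
    _ ≤ (1 + δ) * ρ ^ 2 - u ^ 2 := by nlinarith

theorem hasDerivAt_halfArea (hδ : 0 < δ) : HasDerivAt (halfArea δ) (halfHeight δ x) x :=
  (contDiff_halfHeight hδ).continuous.integral_hasStrictDerivAt 0 x |>.hasDerivAt

theorem contDiff_halfArea (hδ : 0 < δ) : ContDiff ℝ ∞ (halfArea δ) :=
  contDiff_infty_iff_deriv.2 ⟨fun _ => (hasDerivAt_halfArea hδ).differentiableAt, by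
    simpa only [funext fun x => (hasDerivAt_halfArea (x := x) hδ).deriv] using
      contDiff_halfHeight hδ⟩

theorem strictMono_halfArea (hδ : 0 < δ) : StrictMono (halfArea δ) :=
  strictMono_of_deriv_pos fun _ => (hasDerivAt_halfArea hδ).deriv ▸ halfHeight_pos hδ

theorem halfArea_neg : halfArea δ (-x) = -halfArea δ x := by
  have even : (fun s => halfHeight δ (-s)) = halfHeight δ := by simp [funext_iff, halfHeight]
  have reflect := intervalIntegral.integral_comp_neg (a := 0) (b := x) (halfHeight δ)
  rw [even, neg_zero] at reflect
  rw [halfArea, halfArea, reflect, intervalIntegral.integral_symm]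

theorem halfArea_one_pos (hδ : 0 < δ) : 0 < halfArea δ 1 := by
  simpa [halfArea] using strictMono_halfArea hδ one_pos

theorem hasDerivAt_discArea (hδ : 0 < δ) (hr : r ≠ 0) :
    HasDerivAt (discArea δ r) (r * halfHeight δ (u / r)) u := by
  refine (((hasDerivAt_halfArea hδ).comp u
    ((hasDerivAt_id u).div_const r)).const_mul (r ^ 2)).congr_deriv ?_
  simp only [id]
  field_simp

theorem discArea_neg : discArea δ r (-u) = -discArea δ r u := by
  simp only [discArea, neg_div, halfArea_neg, mul_neg]

theorem strictMono_discArea (hδ : 0 < δ) (hr : 0 < r) : StrictMono (discArea δ r) :=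
  strictMono_of_deriv_pos fun _ =>
    (hasDerivAt_discArea hδ hr.ne').deriv ▸ mul_pos hr (halfHeight_pos hδ)

theorem discArea_self (hr : r ≠ 0) : discArea δ r r = r ^ 2 * halfArea δ 1 := by
  rw [discArea, div_self hr]

theorem abs_discArea_lt (hδ : 0 < δ) (hr : 0 < r) (hu : |u| < r) :
    |discArea δ r u| < r ^ 2 * halfArea δ 1 := by
  rw [← discArea_self hr.ne', abs_lt, ← discArea_neg]
  exact (abs_lt.1 hu).imp (strictMono_discArea hδ hr ·) (strictMono_discArea hδ hr ·)

theorem cotangentLift_discArea_of_norm_lt (hδ : 0 < δ) (hr : 0 < r) (hz : ‖z‖ < r) :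
    |(cotangentLift (discArea δ r) z).1| < r ^ 2 * halfArea δ 1 ∧
      |(cotangentLift (discArea δ r) z).2| < 1 := by
  refine ⟨abs_discArea_lt hδ hr ((Complex.abs_re_le_norm z).trans_lt hz), ?_⟩
  have h := mul_pos hr (halfHeight_pos hδ (x := z.re / r))
  rw [cotangentLift, (hasDerivAt_discArea hδ hr.ne').deriv, abs_div, abs_of_pos h, div_lt_one h]
  exact lt_mul_halfHeight hδ hr hz

/-- Interpolation from `discArea δ ρ + σ` (at `w = 0`) to `discArea δ r` (at `w = 1`). -/
noncomputable def discSlide (δ r ρ σ w u : ℝ) : ℝ :=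
  w * discArea δ r u + (1 - w) * (discArea δ ρ u + σ)

theorem hasDerivAt_discSlide (hδ : 0 < δ) (hr : r ≠ 0) (hρ : ρ ≠ 0) :
    HasDerivAt (discSlide δ r ρ σ w)
      (w * (r * halfHeight δ (u / r)) + (1 - w) * (ρ * halfHeight δ (u / ρ))) u :=
  ((hasDerivAt_discArea hδ hr).const_mul w).add
    (((hasDerivAt_discArea hδ hρ).add_const σ).const_mul (1 - w))

theorem deriv_discSlide_pos (hδ : 0 < δ) (hr : 0 < r) (hρ : 0 < ρ) (hw : w ∈ Set.Icc 0 1) :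
    0 < deriv (discSlide δ r ρ σ w) u := by
  rw [(hasDerivAt_discSlide hδ hr.ne' hρ.ne').deriv]
  exact convex_Ioi (0 : ℝ) (mul_pos hr (halfHeight_pos hδ)) (mul_pos hρ (halfHeight_pos hδ)) hw.1
    (sub_nonneg.2 hw.2) (by ring)

theorem deriv_discSlide_le (hδ : 0 < δ) (hr : 0 < r) (hrρ : r ≤ ρ) (hw : w ∈ Set.Icc 0 1)
    (hu : |u| ≤ ρ) : deriv (discSlide δ r ρ σ w) u ≤ √((1 + δ) * ρ ^ 2 - u ^ 2) := by
  have hρ := hr.trans_le hrρ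
  rw [(hasDerivAt_discSlide hδ hr.ne' hρ.ne').deriv]
  exact convex_Iic (√((1 + δ) * ρ ^ 2 - u ^ 2))
    (Real.le_sqrt_of_sq_le (mul_halfHeight_sq_le hδ hr hrρ hu))
    (Real.le_sqrt_of_sq_le (mul_halfHeight_sq_le hδ hρ le_rfl hu)) hw.1
    (sub_nonneg.2 hw.2) (by ring)

theorem abs_lt_of_abs_discSlide_lt (hδ : 0 < δ) (hr : 0 < r) (hrρ : r ≤ ρ)
    (hσ : |σ| ≤ (ρ ^ 2 - r ^ 2) * halfArea δ 1) (hw : w ∈ Set.Icc 0 1)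
    (h : |discSlide δ r ρ σ w u| < r ^ 2 * halfArea δ 1) : |u| < ρ := by
  have hρ := hr.trans_le hrρ
  have mono : StrictMono (discSlide δ r ρ σ w) :=
    strictMono_of_deriv_pos fun _ => deriv_discSlide_pos hδ hr hρ hw
  have area_r : r ^ 2 * halfArea δ 1 ≤ discArea δ r ρ :=
    discArea_self hr.ne' ▸ (strictMono_discArea hδ hr).monotone hrρ
  have area_ρ : discArea δ ρ ρ = ρ ^ 2 * halfArea δ 1 := discArea_self hρ.ne'
  rw [abs_le] at hσ
  rw [abs_lt] at h ⊢
  refine ⟨mono.lt_iff_lt.1 (lt_of_le_of_lt ?_ h.1), mono.lt_iff_lt.1 (h.2.trans_le ?_)⟩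
  · exact convex_Iic (-(r ^ 2 * halfArea δ 1)) (x := discArea δ r (-ρ)) (y := discArea δ ρ (-ρ) + σ)
      (by rw [discArea_neg]; exact neg_le_neg area_r)
      (Set.mem_Iic.2 (by rw [discArea_neg]; linarith)) hw.1 (sub_nonneg.2 hw.2) (by ring)
  · exact convex_Ici (r ^ 2 * halfArea δ 1) (x := discArea δ r ρ) (y := discArea δ ρ ρ + σ)
      area_r (Set.mem_Ici.2 (by linarith)) hw.1 (sub_nonneg.2 hw.2) (by ring)

theorem norm_sq_lt_of_cotangentLift_discSlide (hδ : 0 < δ) (hr : 0 < r) (hrρ : r ≤ ρ)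
    (hσ : |σ| ≤ (ρ ^ 2 - r ^ 2) * halfArea δ 1) (hw : w ∈ Set.Icc 0 1)
    (hfst : |(cotangentLift (discSlide δ r ρ σ w) z).1| < r ^ 2 * halfArea δ 1)
    (hsnd : |(cotangentLift (discSlide δ r ρ σ w) z).2| < 1) : ‖z‖ ^ 2 < (1 + δ) * ρ ^ 2 := by
  have hre : |z.re| < ρ := abs_lt_of_abs_discSlide_lt hδ hr hrρ hσ hw hfst
  have hpos := deriv_discSlide_pos (σ := σ) (u := z.re) hδ hr (hr.trans_le hrρ) hw
  have him : |z.im| < √((1 + δ) * ρ ^ 2 - z.re ^ 2) := by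
    rw [cotangentLift, abs_div, abs_of_pos hpos, div_lt_one hpos] at hsnd
    exact hsnd.trans_le (deriv_discSlide_le hδ hr hrρ hw hre.le)
  rw [Real.lt_sqrt (abs_nonneg _), sq_abs] at him
  rw [Complex.sq_norm, Complex.normSq_apply]
  linarith

end DiscArea

section DiscIsotopy

variable {δ a b t u : ℝ}

/-- An isotopy of increasing functions whose lift displaces the disc of radius `a` from the disc of
radius `b`. With `ρ = √(a ^ 2 + b ^ 2)` it passes from `discArea δ a` to `discArea δ ρ` for
`t ≤ 1 / 2` and on to `discArea δ b` for `1 / 2 ≤ t`. The additive constants are chosen so that the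
rectangle of the first disc at `t = 0` is adjacent to that of the second disc at `t = 1`. -/
noncomputable def discIsotopy (δ a b t u : ℝ) : ℝ :=
  smoothTransition (1 - 2 * t) * discArea δ a u +
  smoothTransition (2 * t - 1) * (discArea δ b u - (a ^ 2 + b ^ 2) * halfArea δ 1) +
  (1 - smoothTransition (1 - 2 * t) - smoothTransition (2 * t - 1)) *
    (discArea δ √(a ^ 2 + b ^ 2) u - b ^ 2 * halfArea δ 1)

theorem discIsotopy_of_le_half (ht : t ≤ 1 / 2) :
    discIsotopy δ a b t = discSlide δ a √(a ^ 2 + b ^ 2) (-(b ^ 2 * halfArea δ 1))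
      (smoothTransition (1 - 2 * t)) := by
  ext u
  rw [discIsotopy, discSlide, smoothTransition.zero_of_nonpos (x := 2 * t - 1) (by linarith)]
  ring

theorem discIsotopy_of_half_le (ht : 1 / 2 ≤ t) :
    discIsotopy δ a b t = fun u => discSlide δ b √(a ^ 2 + b ^ 2) (a ^ 2 * halfArea δ 1)
      (smoothTransition (2 * t - 1)) u - (a ^ 2 + b ^ 2) * halfArea δ 1 := by
  ext u
  rw [discIsotopy, discSlide, smoothTransition.zero_of_nonpos (x := 1 - 2 * t) (by linarith)]
  ring

theorem deriv_discIsotopy_pos (hδ : 0 < δ) (ha : 0 < a) (hb : 0 < b) :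
    0 < deriv (discIsotopy δ a b t) u := by
  have mem (s : ℝ) : smoothTransition s ∈ Set.Icc 0 1 :=
    ⟨smoothTransition.nonneg s, smoothTransition.le_one s⟩
  rcases le_total t (1 / 2) with ht | ht
  · rw [discIsotopy_of_le_half ht]
    exact deriv_discSlide_pos hδ ha (by positivity) (mem _)
  · rw [discIsotopy_of_half_le ht, deriv_sub_const]
    exact deriv_discSlide_pos hδ hb (by positivity) (mem _)

theorem contDiff_discIsotopy {X : Type*} [NormedAddCommGroup X] [NormedSpace ℝ X] {a b : X → ℝ}
    (hδ : 0 < δ) (ha : ContDiff ℝ ∞ a) (hb : ContDiff ℝ ∞ b) (ha' : ∀ x, a x ≠ 0)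
    (hb' : ∀ x, b x ≠ 0) : ContDiff ℝ ∞ ↿fun x => discIsotopy δ (a x) (b x) := by
  have area {r : X → ℝ} (hr : ContDiff ℝ ∞ r) (hr' : ∀ x, r x ≠ 0) :
      ContDiff ℝ ∞ fun p : X × ℝ × ℝ => discArea δ (r p.1) p.2.2 :=
    (hr.fst'.pow 2).mul ((contDiff_halfArea hδ).comp
      (contDiff_snd.snd.div hr.fst' fun p => hr' p.1))
  have hρ : ContDiff ℝ ∞ fun x => √(a x ^ 2 + b x ^ 2) :=
    ((ha.pow 2).add (hb.pow 2)).sqrt fun x => by have := ha' x; positivity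
  have transition {f : ℝ → ℝ} (hf : ContDiff ℝ ∞ f) :
      ContDiff ℝ ∞ fun p : X × ℝ × ℝ => smoothTransition (f p.2.1) :=
    smoothTransition.contDiff.comp (hf.comp contDiff_snd.fst)
  have hα := transition (f := fun t => 1 - 2 * t) (by fun_prop)
  have hω := transition (f := fun t => 2 * t - 1) (by fun_prop)
  have area_a := area ha ha'
  have area_b := area hb hb'
  have area_ρ := area hρ fun x => by have := ha' x; positivity
  have sq_a : ContDiff ℝ ∞ fun p : X × ℝ × ℝ => a p.1 ^ 2 := ha.fst'.pow 2
  have sq_b : ContDiff ℝ ∞ fun p : X × ℝ × ℝ => b p.1 ^ 2 := hb.fst'.pow 2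
  exact ((hα.mul area_a).add (hω.mul (area_b.sub ((sq_a.add sq_b).mul contDiff_const)))).add
    (((contDiff_const.sub hα).sub hω).mul (area_ρ.sub (sq_b.mul contDiff_const)))

theorem discIsotopy_of_nonpos (ht : t ≤ 0) : discIsotopy δ a b t = discArea δ a := by
  ext u
  rw [discIsotopy_of_le_half (by linarith), discSlide, smoothTransition.one_of_one_le (by linarith)]
  ring

theorem discIsotopy_of_one_le (ht : 1 ≤ t) :
    discIsotopy δ a b t = fun u => discArea δ b u - (a ^ 2 + b ^ 2) * halfArea δ 1 := by
  ext u
  rw [discIsotopy_of_half_le (by linarith)]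
  simp only [discSlide, smoothTransition.one_of_one_le (show 1 ≤ 2 * t - 1 by linarith)]
  ring

theorem liftHamiltonian_discIsotopy_eq_zero {z : ℂ} (ht : t ∉ Set.Icc 0 1) :
    liftHamiltonian (discIsotopy δ a b) (t, z) = 0 := by
  have stationary :
      (fun s => discIsotopy δ a b s z.re) =ᶠ[𝓝 t] fun _ => discIsotopy δ a b t z.re := by
    rw [Set.mem_Icc, not_and_or, not_le, not_le] at ht
    rcases ht with ht | ht
    · filter_upwards [Iio_mem_nhds ht] with s hs
      rw [discIsotopy_of_nonpos (le_of_lt hs), discIsotopy_of_nonpos ht.le]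
    · filter_upwards [Ioi_mem_nhds ht] with s hs
      rw [discIsotopy_of_one_le (le_of_lt hs), discIsotopy_of_one_le ht.le]
  rw [liftHamiltonian, stationary.deriv_eq, deriv_const, zero_div, mul_zero]

theorem norm_sq_lt_of_cotangentLift_discIsotopy_of_le_half {z : ℂ} (hδ : 0 < δ) (ha : 0 < a)
    (ht : t ≤ 1 / 2) (hfst : |(cotangentLift (discIsotopy δ a b t) z).1| < a ^ 2 * halfArea δ 1)
    (hsnd : |(cotangentLift (discIsotopy δ a b t) z).2| < 1) :
    ‖z‖ ^ 2 < (1 + δ) * (a ^ 2 + b ^ 2) := by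
  have hρ : √(a ^ 2 + b ^ 2) ^ 2 = a ^ 2 + b ^ 2 := Real.sq_sqrt (by positivity)
  have := halfArea_one_pos hδ
  rw [discIsotopy_of_le_half ht] at hfst hsnd
  rw [← hρ]
  refine norm_sq_lt_of_cotangentLift_discSlide hδ ha (Real.le_sqrt_of_sq_le (by nlinarith)) ?_
    ⟨smoothTransition.nonneg _, smoothTransition.le_one _⟩ hfst hsnd
  rw [abs_neg, abs_of_nonneg (by positivity), hρ, add_sub_cancel_left]

theorem norm_sq_lt_of_cotangentLift_discIsotopy_of_half_le {z : ℂ} (hδ : 0 < δ) (hb : 0 < b)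
    (ht : 1 / 2 ≤ t) (hfst : |(cotangentLift (discIsotopy δ a b t) z).1 +
      (a ^ 2 + b ^ 2) * halfArea δ 1| < b ^ 2 * halfArea δ 1)
    (hsnd : |(cotangentLift (discIsotopy δ a b t) z).2| < 1) :
    ‖z‖ ^ 2 < (1 + δ) * (a ^ 2 + b ^ 2) := by
  have hρ : √(a ^ 2 + b ^ 2) ^ 2 = a ^ 2 + b ^ 2 := Real.sq_sqrt (by positivity)
  have := halfArea_one_pos hδ
  rw [discIsotopy_of_half_le ht, cotangentLift_sub_const] at hfst hsnd
  simp only [Prod.fst_sub, Prod.snd_sub, sub_zero, sub_add_cancel] at hfst hsnd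
  rw [← hρ]
  refine norm_sq_lt_of_cotangentLift_discSlide hδ hb (Real.le_sqrt_of_sq_le (by nlinarith)) ?_
    ⟨smoothTransition.nonneg _, smoothTransition.le_one _⟩ hfst hsnd
  rw [abs_of_nonneg (by positivity), hρ, add_sub_cancel_right]

theorem le_norm_of_hasDerivAt_liftHamiltonian_discIsotopy {z : ℝ → ℂ} (hδ : 0 < δ) (ha : 0 < a)
    (hb : 0 < b) (hz : Continuous z)
    (hode : ∀ t, ‖z t‖ ^ 2 < (1 + δ) * (a ^ 2 + b ^ 2) →
      HasDerivAt z (hamiltonianVectorField (liftHamiltonian (discIsotopy δ a b)) t (z t)) t)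
    (h₀ : ‖z 0‖ < a) : b ≤ ‖z 1‖ := by
  by_contra! h₁
  have smooth : ContDiff ℝ ∞ ↿(discIsotopy δ a b) :=
    (contDiff_discIsotopy hδ contDiff_const contDiff_const (fun _ => ha.ne') (fun _ => hb.ne')).comp
      (contDiff_prodMk_right (0 : ℝ))
  have isOpen_disc : IsOpen {w : ℂ | ‖w‖ ^ 2 < (1 + δ) * (a ^ 2 + b ^ 2)} :=
    isOpen_lt (by fun_prop) continuous_const
  have conserved {J : Set ℝ} {t₀ t : ℝ} :=
    cotangentLift_eq_of_mem (J := J) (t₀ := t₀) (t := t) smooth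
      (fun t u => (deriv_discIsotopy_pos hδ ha hb).ne') hz isOpen_disc hode
  obtain ⟨fst₀, snd₀⟩ := cotangentLift_discArea_of_norm_lt hδ ha h₀
  obtain ⟨fst₁, snd₁⟩ := cotangentLift_discArea_of_norm_lt hδ hb h₁
  have lift₀ : cotangentLift (discIsotopy δ a b 0) (z 0) = cotangentLift (discArea δ a) (z 0) := by
    rw [discIsotopy_of_nonpos le_rfl]
  have lift₁ : cotangentLift (discIsotopy δ a b 1) (z 1) =
      cotangentLift (discArea δ b) (z 1) - ((a ^ 2 + b ^ 2) * halfArea δ 1, 0) := by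
    rw [discIsotopy_of_one_le le_rfl, cotangentLift_sub_const]
  have forward := conserved (t₀ := 0) (t := 1 / 2) (isPreconnected_Icc (a := 0) (b := 1 / 2))
    (by norm_num) (by norm_num) fun s hs w hw =>
      norm_sq_lt_of_cotangentLift_discIsotopy_of_le_half hδ ha hs.2 (by rwa [hw, lift₀])
        (by rwa [hw, lift₀])
  have backward := conserved (t₀ := 1) (t := 1 / 2) (isPreconnected_Icc (a := 1 / 2) (b := 1))
    (by norm_num) (by norm_num) fun s hs w hw =>
      norm_sq_lt_of_cotangentLift_discIsotopy_of_half_le hδ hb hs.1 (by simpa [hw, lift₁])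
        (by simpa [hw, lift₁])
  have eq_fst := congrArg Prod.fst (forward.symm.trans backward)
  rw [lift₀, lift₁, Prod.fst_sub] at eq_fst
  linarith [abs_lt.1 fst₀, abs_lt.1 fst₁]

end DiscIsotopy

section Tubes

theorem exists_pos_setOf_le_subset {X : Type*} [TopologicalSpace X] {f : X → ℝ} {s U : Set X}
    (hf : Continuous f) (hs : IsCompact {x | x ∈ s ∧ f x ≤ 1}) (hU : IsOpen U)
    (hsU : {x | x ∈ s ∧ f x ≤ 0} ⊆ U) : ∃ e > 0, {x | x ∈ s ∧ f x ≤ e} ⊆ U := by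
  obtain ⟨e, he, le_f⟩ := (hs.diff hU).exists_forall_le' hf.continuousOn (a := 0) fun x hx =>
    not_le.1 fun hfx => hx.2 (hsU ⟨hx.1.1, hfx⟩)
  refine ⟨min 1 (e / 2), by positivity, fun x ⟨hxs, hfx⟩ => ?_⟩
  by_contra hxU
  linarith [le_f x ⟨⟨hxs, hfx.trans (min_le_left _ _)⟩, hxU⟩, hfx.trans (min_le_right _ _)]

variable {X : Type*} [TopologicalSpace X] {C : Set X} {A : X → ℝ}

/-- The union of the closed discs of area `A x` centred at `0` over the points `x ∈ C`. -/
def discTube (C : Set X) (A : X → ℝ) : Set (X × ℂ) := {p | p.1 ∈ C ∧ π * ‖p.2‖ ^ 2 ≤ A p.1}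

theorem isCompact_discTube [T2Space X] (hC : IsCompact C) (hA : Continuous A) :
    IsCompact (discTube C A) := by
  obtain ⟨B, hB⟩ := hC.exists_bound_of_continuousOn hA.continuousOn
  have closed : IsClosed (discTube C A) := (hC.isClosed.preimage continuous_fst).inter
    (isClosed_le (f := fun p : X × ℂ => π * ‖p.2‖ ^ 2) (by fun_prop) (hA.comp continuous_fst))
  refine (hC.prod (isCompact_closedBall (0 : ℂ) √(B / π))).of_isClosed_subset closed
    fun p ⟨hpC, hpA⟩ => ⟨hpC, mem_closedBall_zero_iff.2 (Real.le_sqrt_of_sq_le ?_)⟩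
  rw [le_div_iff₀' pi_pos]
  exact hpA.trans ((le_abs_self _).trans (hB p.1 hpC))

theorem exists_discTube_add_subset [T2Space X] {U : Set (X × ℂ)} (hC : IsCompact C)
    (hA : Continuous A) (hU : IsOpen U) (hCU : discTube C A ⊆ U) :
    ∃ e > 0, discTube C (fun x => A x + e) ⊆ U := by
  have setOf_eq (e : ℝ) : {p : X × ℂ | p ∈ Prod.fst ⁻¹' C ∧ π * ‖p.2‖ ^ 2 - A p.1 ≤ e} =
      discTube C fun x => A x + e := by
    simp only [discTube, sub_le_iff_le_add', Set.mem_preimage]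
  simp only [← setOf_eq]
  refine exists_pos_setOf_le_subset (by fun_prop) ?_ hU ?_
  · exact setOf_eq 1 ▸ isCompact_discTube hC (hA.add_const 1)
  · simpa only [setOf_eq, add_zero] using hCU

end Tubes

section Families

variable {X : Type*} [NormedAddCommGroup X] [NormedSpace ℝ X]

theorem exists_contDiff_eq_one_eq_zero [FiniteDimensional ℝ X] {L U : Set X} (hL : IsCompact L)
    (hU : IsOpen U) (hLU : L ⊆ U) : ∃ (f : X → ℝ) (K : Set X),
      ContDiff ℝ ∞ f ∧ IsCompact K ∧ K ⊆ U ∧ (∀ x ∈ L, f x = 1) ∧ ∀ x ∉ K, f x = 0 := by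
  have : ProperSpace X := FiniteDimensional.proper ℝ X
  obtain ⟨K, hK, hLK, hKU⟩ := exists_compact_between hL hU hLU
  obtain ⟨f, hf₁, hf₀, -⟩ := exists_contMDiffMap_one_nhds_of_subset_interior
    (n := ⊤) (modelWithCornersSelf ℝ X) hL.isClosed hLK
  exact ⟨f, K, f.contMDiff.contDiff, hK, hKU, fun x hx => hf₁.self_of_nhdsSet x hx, hf₀⟩

theorem exists_contDiff_radius {A : X → ℝ} {ε : ℝ} (hA : ContDiff ℝ ∞ A) (hε : 0 < ε) :
    ∃ r : X → ℝ, ContDiff ℝ ∞ r ∧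
      ∀ x, 0 < r x ∧ A x < π * r x ^ 2 ∧ π * r x ^ 2 ≤ max (A x) 0 + ε := by
  have hpos (x : X) : 0 < smoothPosPart ε (A x) / π := div_pos (smoothPosPart_pos hε) pi_pos
  refine ⟨fun x => √(smoothPosPart ε (A x) / π),
    (((contDiff_smoothPosPart hε.ne').comp hA).div_const π).sqrt fun x => (hpos x).ne',
    fun x => ⟨Real.sqrt_pos.2 (hpos x), ?_⟩⟩
  rw [Real.sq_sqrt (hpos x).le, mul_div_cancel₀ _ pi_ne_zero]
  exact ⟨(le_max_left _ _).trans_lt (max_zero_lt_smoothPosPart hε), smoothPosPart_le hε.le⟩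

variable {A₁ A₂ : X → ℝ} {C : Set X}

theorem exists_contDiff_radii {e : ℝ} (hA₁ : ContDiff ℝ ∞ A₁) (hA₂ : ContDiff ℝ ∞ A₂)
    (hC : IsCompact C) (hA₁C : ∀ x ∈ C, 0 ≤ A₁ x) (hA₂C : ∀ x ∈ C, 0 ≤ A₂ x) (he : 0 < e) :
    ∃ δ > 0, ∃ r₁ r₂ : X → ℝ, ContDiff ℝ ∞ r₁ ∧ ContDiff ℝ ∞ r₂ ∧
      (∀ x, 0 < r₁ x ∧ A₁ x < π * r₁ x ^ 2) ∧ (∀ x, 0 < r₂ x ∧ A₂ x < π * r₂ x ^ 2) ∧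
      ∀ x ∈ C, π * ((1 + δ) * (r₁ x ^ 2 + r₂ x ^ 2)) ≤ A₁ x + A₂ x + e := by
  obtain ⟨r₁, smooth₁, area₁⟩ := exists_contDiff_radius hA₁ (show 0 < e / 4 by positivity)
  obtain ⟨r₂, smooth₂, area₂⟩ := exists_contDiff_radius hA₂ (show 0 < e / 4 by positivity)
  obtain ⟨B, hB⟩ := hC.exists_bound_of_continuousOn (f := fun x => π * (r₁ x ^ 2 + r₂ x ^ 2))
    (((smooth₁.continuous.pow 2).add (smooth₂.continuous.pow 2)).const_mul π).continuousOn
  obtain ⟨δ, hδ, hδB⟩ := exists_pos_mul_lt (half_pos he) B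
  refine ⟨δ, hδ, r₁, r₂, smooth₁, smooth₂, fun x => ⟨(area₁ x).1, (area₁ x).2.1⟩,
    fun x => ⟨(area₂ x).1, (area₂ x).2.1⟩, fun x hx => ?_⟩
  have le₁ := (area₁ x).2.2
  have le₂ := (area₂ x).2.2
  have excess : π * (r₁ x ^ 2 + r₂ x ^ 2) * δ ≤ B * δ := by
    gcongr
    exact (le_abs_self _).trans (hB x hx)
  rw [max_eq_left (hA₁C x hx)] at le₁
  rw [max_eq_left (hA₂C x hx)] at le₂
  linarith

theorem exists_hamiltonian_displacing_discs [FiniteDimensional ℝ X] {U : Set (X × ℂ)}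
    (hA₁ : ContDiff ℝ ∞ A₁) (hA₂ : ContDiff ℝ ∞ A₂) (hC : IsCompact C)
    (hA₁C : ∀ x ∈ C, 0 ≤ A₁ x) (hA₂C : ∀ x ∈ C, 0 ≤ A₂ x) (hU : IsOpen U)
    (hCU : discTube C (fun x => A₁ x + A₂ x) ⊆ U) :
    ∃ (F : ℝ × X × ℂ → ℝ) (K : Set (X × ℂ)), ContDiff ℝ ∞ F ∧ IsCompact K ∧ K ⊆ U ∧
      (∀ q ∉ Set.Icc 0 1 ×ˢ K, F q = 0) ∧
      ∀ x ∈ C, ∀ z : ℝ → ℂ,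
        IsIntegralCurve z (hamiltonianVectorField fun q => F (q.1, x, q.2)) →
        π * ‖z 0‖ ^ 2 ≤ A₁ x → A₂ x < π * ‖z 1‖ ^ 2 := by
  have hA := hA₁.continuous.add hA₂.continuous
  obtain ⟨e, he, heU⟩ := exists_discTube_add_subset hC hA hU hCU
  obtain ⟨Ψ, K, hΨ, hK, hKU, hΨ₁, hΨ₀⟩ := exists_contDiff_eq_one_eq_zero
    (isCompact_discTube hC (hA.add_const e)) hU heU
  obtain ⟨δ, hδ, r₁, r₂, smooth₁, smooth₂, area₁, area₂, area_le⟩ :=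
    exists_contDiff_radii hA₁ hA₂ hC hA₁C hA₂C he
  have hQ := contDiff_liftHamiltonian_of_uncurry
    (contDiff_discIsotopy hδ smooth₁ smooth₂ (fun x => (area₁ x).1.ne') fun x => (area₂ x).1.ne')
    fun x _ _ => (deriv_discIsotopy_pos hδ (area₁ x).1 (area₂ x).1).ne'
  refine ⟨fun q => Ψ q.2 * liftHamiltonian (discIsotopy δ (r₁ q.2.1) (r₂ q.2.1)) (q.1, q.2.2), K,
    hΨ.snd'.mul (hQ.comp (f := fun q : ℝ × X × ℂ => (q.2.1, q.1, q.2.2)) (by fun_prop)),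
    hK, hKU, ?_, fun x hx z hz hz₀ => ?_⟩
  · rintro ⟨t, p⟩ htp
    by_cases ht : t ∈ Set.Icc 0 1
    · simp only [hΨ₀ p fun hp => htp ⟨ht, hp⟩, zero_mul]
    · simp only [liftHamiltonian_discIsotopy_eq_zero ht, mul_zero]
  · have lt_iff {s r : ℝ} : π * s ^ 2 < π * r ^ 2 ↔ s ^ 2 < r ^ 2 := mul_lt_mul_iff_right₀ pi_pos
    have le_norm : r₂ x ≤ ‖z 1‖ := by
      refine le_norm_of_hasDerivAt_liftHamiltonian_discIsotopy hδ (area₁ x).1 (area₂ x).1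
        hz.continuous (fun t ht => (hz t).congr_deriv ?_) ?_
      · have cutoff_eq_one : ∀ᶠ w in 𝓝 (z t), Ψ (x, w) = 1 := by
          filter_upwards [(continuous_norm.pow 2).continuousAt.eventually_lt_const ht] with w hw
          exact hΨ₁ _ ⟨hx, (mul_le_mul_of_nonneg_left hw.le pi_pos.le).trans (area_le x hx)⟩
        refine congrArg (Complex.I • ·) (Filter.EventuallyEq.gradient_eq ?_)
        filter_upwards [cutoff_eq_one] with w hw
        rw [hw, one_mul]
      · exact lt_of_pow_lt_pow_left₀ 2 (area₁ x).1.le (lt_iff.1 (hz₀.trans_lt (area₁ x).2))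
    refine (area₂ x).2.trans_le ?_
    have := (area₂ x).1.le
    gcongr

end Families

section Reduction

variable {ι : Type*} [Fintype ι] {κ : ι → ℝ} {i : ι}

/-- The weighted sum of squares `∑ j, κ j * |v j| ^ 2` on `ℂ^ι`. -/
noncomputable def weightedSqNorm (κ : ι → ℝ) (v : EuclideanSpace ℂ ι) : ℝ :=
  ∑ j, κ j * ‖v j‖ ^ 2

theorem contDiff_weightedSqNorm : ContDiff ℝ ∞ (weightedSqNorm κ) := by
  unfold weightedSqNorm
  refine ContDiff.sum fun j _ => contDiff_const.mul (ContDiff.norm_sq ℝ ?_)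
  fun_prop

theorem hasGradientAt_weightedSqNorm (v : EuclideanSpace ℂ ι) :
    HasGradientAt (weightedSqNorm κ) (WithLp.toLp 2 fun j => (2 * κ j) • v j) v := by
  rw [hasGradientAt_iff_hasFDerivAt]
  refine (HasFDerivAt.fun_sum fun j (_ : j ∈ Finset.univ) =>
    (PiLp.hasFDerivAt_apply (𝕜 := ℝ) 2 v j).norm_sq.const_mul (κ j)).congr_fderiv ?_
  ext h
  simp only [sum_apply, smul_apply,
    ContinuousLinearMap.comp_apply, innerSL_apply_apply, PiLp.proj_apply, nsmul_eq_mul,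
    InnerProductSpace.toDual_apply_apply, PiLp.inner_apply, real_inner_smul_left, smul_eq_mul]
  exact Finset.sum_congr rfl fun j _ => by push_cast; ring

theorem real_inner_single_left [DecidableEq ι] (a : ℂ) (v : EuclideanSpace ℂ ι) :
    inner ℝ (EuclideanSpace.single i a) v = inner ℝ a (v i) := by
  rw [PiLp.inner_apply, Finset.sum_eq_single_of_mem i (Finset.mem_univ i) fun j _ hj => by
    rw [PiLp.single_eq_of_ne _ hj, inner_zero_left], PiLp.single_eq_same]

theorem hasGradientAt_comp_prodMk [DecidableEq ι] {N : EuclideanSpace ℂ ι → ℝ} {F : ℝ × ℂ → ℝ}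
    {v g : EuclideanSpace ℂ ι} (hN : HasGradientAt N g v)
    (hF : DifferentiableAt ℝ F (N v, v i)) :
    HasGradientAt (fun w => F (N w, w i))
      (deriv (fun n => F (n, v i)) (N v) • g +
        EuclideanSpace.single i (gradient (fun z => F (N v, z)) (v i))) v := by
  rw [hasGradientAt_iff_hasFDerivAt] at hN ⊢
  refine (hF.hasFDerivAt.comp v
    (hN.prodMk (PiLp.hasFDerivAt_apply (𝕜 := ℝ) 2 v i))).congr_fderiv ?_
  have partial_fst : deriv (fun n => F (n, v i)) (N v) = fderiv ℝ F (N v, v i) (1, 0) :=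
    (hF.hasFDerivAt.comp_hasDerivAt (N v)
      ((hasDerivAt_id (N v)).prodMk (hasDerivAt_const (N v) (v i)))).deriv
  have partial_snd : HasFDerivAt (fun z => F (N v, z)) _ (v i) :=
    hF.hasFDerivAt.comp (v i) (hasFDerivAt_prodMk_right (N v) (v i))
  ext h
  have split : (inner ℝ g h, h i) = inner ℝ g h • ((1, 0) : ℝ × ℂ) + (0, h i) := by simp
  calc fderiv ℝ F (N v, v i) (inner ℝ g h, h i)
      = inner ℝ g h • fderiv ℝ F (N v, v i) (1, 0) + fderiv ℝ F (N v, v i) (0, h i) := by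
        rw [split, map_add, map_smul]
    _ = _ := by
        rw [InnerProductSpace.toDual_apply_apply, inner_add_left, real_inner_smul_left,
          real_inner_single_left, inner_gradient_left, partial_snd.fderiv, partial_fst, mul_comm]
        rfl

section Trajectories

variable {F : ℝ × ℝ × ℂ → ℝ}

theorem hamiltonianVectorField_comp_weightedSqNorm [DecidableEq ι] (hF : Differentiable ℝ F)
    (t : ℝ) (v : EuclideanSpace ℂ ι) :
    hamiltonianVectorField (fun q => F (q.1, weightedSqNorm κ q.2, q.2 i)) t v =
      deriv (fun n => F (t, n, v i)) (weightedSqNorm κ v) •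
        WithLp.toLp 2 (fun j => Complex.I • (2 * κ j) • v j) +
      EuclideanSpace.single i
        (hamiltonianVectorField (fun q => F (q.1, weightedSqNorm κ v, q.2)) t (v i)) := by
  rw [hamiltonianVectorField, (hasGradientAt_comp_prodMk (F := fun p => F (t, p))
    (hasGradientAt_weightedSqNorm v) (by fun_prop)).gradient, smul_add, smul_comm]
  congr 1
  ext j
  by_cases hj : j = i <;> simp [hj, hamiltonianVectorField]

variable {γ : ℝ → EuclideanSpace ℂ ι}

theorem weightedSqNorm_eq_of_isIntegralCurve (hF : Differentiable ℝ F) (hi : κ i = 0)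
    (hγ : IsIntegralCurve γ
      (hamiltonianVectorField fun q => F (q.1, weightedSqNorm κ q.2, q.2 i))) (t s : ℝ) :
    weightedSqNorm κ (γ t) = weightedSqNorm κ (γ s) := by
  classical
  have orthogonal (v : EuclideanSpace ℂ ι) : inner ℝ (WithLp.toLp 2 fun j => (2 * κ j) • v j)
      (WithLp.toLp 2 fun j => Complex.I • (2 * κ j) • v j) = 0 := by
    rw [PiLp.inner_apply]
    exact Finset.sum_eq_zero fun j _ => real_inner_I_smul_self (𝕜 := ℂ) ((2 * κ j) • v j)
  have hderiv (t : ℝ) : HasDerivAt (fun s => weightedSqNorm κ (γ s)) 0 t := by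
    refine ((hasGradientAt_weightedSqNorm (γ t)).hasFDerivAt.comp_hasDerivAt t
      (hγ t)).congr_deriv ?_
    rw [InnerProductSpace.toDual_apply_apply, hamiltonianVectorField_comp_weightedSqNorm hF,
      inner_add_right, real_inner_smul_right, orthogonal, mul_zero, zero_add, real_inner_comm,
      real_inner_single_left]
    simp only [hi, mul_zero, zero_smul, inner_zero_right]
  exact is_const_of_deriv_eq_zero (fun t => (hderiv t).differentiableAt)
    (fun t => (hderiv t).deriv) t s

theorem isIntegralCurve_apply_of_isIntegralCurve (hF : Differentiable ℝ F) (hi : κ i = 0)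
    (hγ : IsIntegralCurve γ
      (hamiltonianVectorField fun q => F (q.1, weightedSqNorm κ q.2, q.2 i))) :
    IsIntegralCurve (fun t => γ t i)
      (hamiltonianVectorField fun q => F (q.1, weightedSqNorm κ (γ 0), q.2)) := by
  classical
  intro t
  refine ((PiLp.hasFDerivAt_apply (𝕜 := ℝ) 2 (γ t) i).comp_hasDerivAt t (hγ t)).congr_deriv ?_
  rw [hamiltonianVectorField_comp_weightedSqNorm hF,
    weightedSqNorm_eq_of_isIntegralCurve hF hi hγ t 0]
  simp [hi]

end Trajectories

theorem isProperMap_weightedSqNorm_prodMk_apply (hi : 0 ≤ κ i) (hκ : ∀ j ≠ i, 0 < κ j) :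
    IsProperMap fun v : EuclideanSpace ℂ ι => (weightedSqNorm κ v, v i) := by
  have nonneg (j : ι) : 0 ≤ κ j := by
    rcases eq_or_ne j i with rfl | hj
    exacts [hi, (hκ j hj).le]
  have hcont : Continuous fun v : EuclideanSpace ℂ ι => (weightedSqNorm κ v, v i) :=
    contDiff_weightedSqNorm.continuous.prodMk (by fun_prop)
  refine isProperMap_iff_isCompact_preimage.2 ⟨hcont, fun K hK =>
    Metric.isCompact_of_isClosed_isBounded (hK.isClosed.preimage hcont) ?_⟩
  obtain ⟨R, hR⟩ := hK.isBounded.exists_norm_le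
  have coord_le (v : EuclideanSpace ℂ ι) (hv : (weightedSqNorm κ v, v i) ∈ K) (j : ι) :
      ‖v j‖ ^ 2 ≤ max (R ^ 2) (R / κ j) := by
    rcases eq_or_ne j i with rfl | hj
    · have : ‖v j‖ ≤ R := (norm_snd_le _).trans (hR _ hv)
      exact le_max_of_le_left (by gcongr)
    · refine le_max_of_le_right ((le_div_iff₀' (hκ j hj)).2 ?_)
      calc κ j * ‖v j‖ ^ 2 ≤ weightedSqNorm κ v :=
            Finset.single_le_sum (f := fun j => κ j * ‖v j‖ ^ 2)
              (fun j _ => mul_nonneg (nonneg j) (sq_nonneg _)) (Finset.mem_univ j)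
        _ ≤ R := (le_abs_self _).trans ((norm_fst_le _).trans (hR _ hv))
  refine isBounded_iff_forall_norm_le.2 ⟨√(∑ j, max (R ^ 2) (R / κ j)), fun v hv => ?_⟩
  rw [EuclideanSpace.norm_eq]
  gcongr with j
  exact coord_le v hv j

theorem contDiff_comp_weightedSqNorm {F : ℝ × ℝ × ℂ → ℝ} (hF : ContDiff ℝ ∞ F) :
    ContDiff ℝ ∞ fun q : ℝ × EuclideanSpace ℂ ι => F (q.1, weightedSqNorm κ q.2, q.2 i) :=
  hF.comp (contDiff_fst.prodMk (contDiff_weightedSqNorm.snd'.prodMk (by fun_prop)))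

theorem exists_isIntegralCurve_comp_weightedSqNorm {F : ℝ × ℝ × ℂ → ℝ} (hF : ContDiff ℝ ∞ F)
    (hFc : HasCompactSupport F) (hi : κ i = 0) (hκ : ∀ j ≠ i, 0 < κ j) (v : EuclideanSpace ℂ ι) :
    ∃ γ : ℝ → EuclideanSpace ℂ ι, γ 0 = v ∧
      IsIntegralCurve γ (hamiltonianVectorField fun q => F (q.1, weightedSqNorm κ q.2, q.2 i)) ∧
      (∀ t, weightedSqNorm κ (γ t) = weightedSqNorm κ v) ∧
      IsIntegralCurve (fun t => γ t i)
        (hamiltonianVectorField fun q => F (q.1, weightedSqNorm κ v, q.2)) := by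
  have hF' : Differentiable ℝ F := hF.differentiable (by simp)
  have proper := (isProperMap_id (X := ℝ)).prodMap
    (isProperMap_weightedSqNorm_prodMk_apply hi.ge hκ)
  have compact_support : HasCompactSupport fun q : ℝ × EuclideanSpace ℂ ι =>
      F (q.1, weightedSqNorm κ q.2, q.2 i) :=
    HasCompactSupport.intro (proper.isCompact_preimage hFc) fun _ hq =>
      image_eq_zero_of_notMem_tsupport hq
  obtain ⟨γ, rfl, hγ⟩ := exists_isIntegralCurve_hamiltonianVectorField
    (contDiff_comp_weightedSqNorm hF) compact_support v
  exact ⟨γ, rfl, hγ, (weightedSqNorm_eq_of_isIntegralCurve hF' hi hγ · 0),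
    isIntegralCurve_apply_of_isIntegralCurve hF' hi hγ⟩

end Reduction

/-- disjoining a family of discs: on `ℂ × ℂᵐ`, identified with `ℂ^{m+1}` (the
`z`-component being coordinate `0` and the `w`-component the remaining `m` coordinates), with
`N(w) = π Σⱼ cⱼ |wⱼ|²` for positive `cⱼ`, and smooth `A₁ A₂ : ℝ → ℝ` such that
`C = {x ≥ 0 : A₁ x ≥ 0, A₂ x ≥ 0}` is compact: for every open `U` containing
`{(z,w) : N w ∈ C, π|z|² ≤ A₁(N w) + A₂(N w)}` there are a smooth time-dependent Hamiltonian
`G` vanishing (for all times) outside a compact subset `K ⊆ U`, and a Hamiltonian flow `b` of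
`G`, preserving `(z,w) ↦ N w`, whose time-one map moves `{π|z|² ≤ A₁(N w)}` off
`{π|z|² ≤ A₂(N w)}`. -/
theorem stmt_6 (m : ℕ) (hm : 1 ≤ m) (c : Fin m → ℝ) (hc : ∀ j, 0 < c j)
    (N : EuclideanSpace ℂ (Fin (m + 1)) → ℝ)
    (hN : ∀ v, N v = π * ∑ j : Fin m, c j * ‖v j.succ‖ ^ 2)
    (A₁ A₂ : ℝ → ℝ) (hA₁ : ContDiff ℝ (⊤ : ℕ∞) A₁) (hA₂ : ContDiff ℝ (⊤ : ℕ∞) A₂)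
    (hC : IsCompact {x : ℝ | 0 ≤ x ∧ 0 ≤ A₁ x ∧ 0 ≤ A₂ x})
    (U : Set (EuclideanSpace ℂ (Fin (m + 1)))) (hUopen : IsOpen U)
    (hUsub : {v : EuclideanSpace ℂ (Fin (m + 1)) |
        (0 ≤ N v ∧ 0 ≤ A₁ (N v) ∧ 0 ≤ A₂ (N v)) ∧
        π * ‖v 0‖ ^ 2 ≤ A₁ (N v) + A₂ (N v)} ⊆ U) :
    ∃ (G : ℝ × EuclideanSpace ℂ (Fin (m + 1)) → ℝ)
      (K : Set (EuclideanSpace ℂ (Fin (m + 1))))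
      (b : ℝ → EuclideanSpace ℂ (Fin (m + 1)) → EuclideanSpace ℂ (Fin (m + 1))),
      ContDiff ℝ (⊤ : ℕ∞) G ∧ IsCompact K ∧ K ⊆ U ∧
      (∀ (t : ℝ) (v : EuclideanSpace ℂ (Fin (m + 1))), v ∉ K → G (t, v) = 0) ∧
      b 0 = id ∧
      (∀ (v : EuclideanSpace ℂ (Fin (m + 1))) (t : ℝ),
        HasDerivAt (fun s => b s v) (Complex.I • gradient (fun w => G (t, w)) (b t v)) t) ∧
      (∀ (t : ℝ) (v : EuclideanSpace ℂ (Fin (m + 1))), N (b t v) = N v) ∧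
      Disjoint
        (b 1 '' {v : EuclideanSpace ℂ (Fin (m + 1)) | π * ‖v 0‖ ^ 2 ≤ A₁ (N v)})
        {v : EuclideanSpace ℂ (Fin (m + 1)) | π * ‖v 0‖ ^ 2 ≤ A₂ (N v)} := by
  obtain ⟨κ, hκ₀, hκ, rfl⟩ : ∃ κ : Fin (m + 1) → ℝ,
      κ 0 = 0 ∧ (∀ j ≠ 0, 0 < κ j) ∧ N = weightedSqNorm κ := by
    refine ⟨Fin.cons 0 fun j => π * c j, rfl, Fin.cases (absurd rfl) fun j _ =>
      mul_pos pi_pos (hc j), funext fun v => ?_⟩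
    simp [hN, weightedSqNorm, Fin.sum_univ_succ, Finset.mul_sum, mul_assoc]
  have proper := isProperMap_weightedSqNorm_prodMk_apply hκ₀.ge hκ
  obtain ⟨F, K, hF, hK, hKU, hF₀, displaced⟩ := exists_hamiltonian_displacing_discs hA₁ hA₂ hC
    (fun x hx => hx.2.1) (fun x hx => hx.2.2)
    (proper.isClosedMap Uᶜ hUopen.isClosed_compl).isOpen_compl
    (by rintro _ hp ⟨v, hvU, rfl⟩; exact hvU (hUsub hp))
  choose γ hγ₀ hγ preserved hγz using exists_isIntegralCurve_comp_weightedSqNorm hF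
    (HasCompactSupport.intro (isCompact_Icc.prod hK) hF₀) hκ₀ hκ
  refine ⟨_, (fun v => (weightedSqNorm κ v, v 0)) ⁻¹' K, fun t v => γ v t,
    contDiff_comp_weightedSqNorm hF, proper.isCompact_preimage hK,
    fun v hv => by_contra fun hvU => hKU hv ⟨v, hvU, rfl⟩, fun t v hv => hF₀ _ (hv ·.2),
    funext hγ₀, hγ, fun t v => preserved v t, Set.disjoint_left.2 ?_⟩
  rintro _ ⟨v, hv, rfl⟩ (hw : π * ‖γ v 1 0‖ ^ 2 ≤ A₂ (weightedSqNorm κ (γ v 1)))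
  rw [preserved] at hw
  have nonneg : 0 ≤ weightedSqNorm κ v := (hN v).symm ▸
    mul_nonneg pi_pos.le (Finset.sum_nonneg fun j _ => mul_nonneg (hc j).le (sq_nonneg _))
  have level_mem : weightedSqNorm κ v ∈ {x : ℝ | 0 ≤ x ∧ 0 ≤ A₁ x ∧ 0 ≤ A₂ x} :=
    ⟨nonneg, le_trans (by positivity) hv, le_trans (by positivity) hw⟩
  exact hw.not_gt (displaced _ level_mem _ (hγz v) (by rwa [hγ₀]))
end

section
/- Let a and b be positive integers and let λ ∈ ℂ. Define φ̄ : ℝ → ℂ → ℂ by φ̄ t z = exp(−2πi·a·t)·(exp(−2πi·b·t)·(z − λ) + λ), and define the time-dependent Hamiltonian H̄ : ℝ × ℂ → ℝ by H̄ t z = −π·(a·|z|² + b·|exp(2πi·a·t)·z − λ|²). Then: (i) φ̄ 0 = id and φ̄ 1 = id (so φ̄ is a loop based at the identity); and (ii) φ̄ is a Hamiltonian flow of H̄, i.e. for every z ∈ ℂ and t ∈ ℝ the curve s ↦ φ̄ s z has derivative Complex.I * ∇(H̄ t) (φ̄ t z) at time t. -/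
open Real
open scoped ComplexConjugate

/-! The loop is `t ↦ R_t ∘ S_t`, where `R_t z = exp(-2πi a t) z` rotates about `0` and `S_t`
rotates about `λ` at speed `b`; these are the flows of `-πa|z|²` and `-πb|z - λ|²`. If `R` and `S`
are the flows of `F` and `G`, then `R_t ∘ S_t` is the flow of `F_t + G_t ∘ R_t⁻¹`: in the
derivative of `R_t (S_t z)` the second term is `R_t (i ∇G_t)`, and `R_t ∇G_t = ∇(G_t ∘ R_t⁻¹)`
because `R_t` is unitary and commutes with `i`. -/

section Gradient

variable {𝕜 E E' : Type*} [RCLike 𝕜]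
  [NormedAddCommGroup E] [InnerProductSpace 𝕜 E] [CompleteSpace E]
  [NormedAddCommGroup E'] [InnerProductSpace 𝕜 E'] [CompleteSpace E']

theorem hasGradientAt_add {f g : E → 𝕜} {f' g' x : E}
    (hf : HasGradientAt f f' x) (hg : HasGradientAt g g' x) :
    HasGradientAt (fun y => f y + g y) (f' + g') x := by
  rw [hasGradientAt_iff_hasFDerivAt, map_add]
  exact hf.hasFDerivAt.add hg.hasFDerivAt

theorem hasGradientAt_comp_continuousLinearMap {f : E' → 𝕜} {f' : E'} (L : E →L[𝕜] E') {x : E}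
    (hf : HasGradientAt f f' (L x)) :
    HasGradientAt (fun y => f (L y)) (L.adjoint f') x := by
  rw [hasGradientAt_iff_hasFDerivAt]
  refine (hf.hasFDerivAt.comp x L.hasFDerivAt).congr_fderiv ?_
  ext v
  simp [ContinuousLinearMap.adjoint_inner_left]

theorem hasGradientAt_const_mul_norm_sub_sq {V : Type*} [NormedAddCommGroup V]
    [InnerProductSpace ℝ V] [CompleteSpace V] (k : ℝ) (c x : V) :
    HasGradientAt (fun y => k * ‖y - c‖ ^ 2) ((2 * k) • (x - c)) x := by
  rw [hasGradientAt_iff_hasFDerivAt]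
  refine (((hasFDerivAt_id x).sub_const c).norm_sq.const_mul k).congr_fderiv ?_
  ext v
  simp only [id_eq, ContinuousLinearMap.comp_id, smul_apply, coe_innerSL_apply, nsmul_eq_mul,
    Nat.cast_ofNat, smul_eq_mul, map_smul, InnerProductSpace.toDual_apply_apply]
  ring

theorem adjoint_mul_complex (c : ℂ) :
    (ContinuousLinearMap.mul ℝ ℂ c).adjoint = ContinuousLinearMap.mul ℝ ℂ (conj c) := by
  rw [eq_comm, ContinuousLinearMap.eq_adjoint_iff]
  intro z w
  simp only [ContinuousLinearMap.mul_apply', Complex.inner, map_mul, Complex.conj_conj]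
  congr 1
  ring

theorem hasGradientAt_comp_complex_mul {f : ℂ → ℝ} {f' c z : ℂ}
    (hf : HasGradientAt f f' (c * z)) :
    HasGradientAt (fun w => f (c * w)) (conj c * f') z := by
  simpa [adjoint_mul_complex] using
    hasGradientAt_comp_continuousLinearMap (ContinuousLinearMap.mul ℝ ℂ c) hf

end Gradient

/-- `φ` is a Hamiltonian flow of the time-dependent Hamiltonian `F` on `ℂ` with `ω = dx ∧ dy`:
it starts at the identity and its trajectories are integral curves of `X_F = i ∇F`. -/
structure IsHamiltonianFlow (F : ℝ → ℂ → ℝ) (φ : ℝ → ℂ → ℂ) : Prop where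
  zero_eq_id : φ 0 = id
  hasDerivAt (z : ℂ) (t : ℝ) :
    HasDerivAt (fun s => φ s z) (Complex.I * gradient (F t) (φ t z)) t

theorem IsHamiltonianFlow.unitary_mul {F G : ℝ → ℂ → ℝ} {u : ℝ → ℂ} {ψ : ℝ → ℂ → ℂ}
    (hu : IsHamiltonianFlow F fun t z => u t * z) (hψ : IsHamiltonianFlow G ψ)
    (norm_u : ∀ t, ‖u t‖ = 1)
    (hF : ∀ t, Differentiable ℝ (F t)) (hG : ∀ t, Differentiable ℝ (G t)) :
    IsHamiltonianFlow (fun t z => F t z + G t (conj (u t) * z)) fun t z => u t * ψ t z where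
  zero_eq_id := by
    rw [hψ.zero_eq_id]
    exact hu.zero_eq_id
  hasDerivAt z t := by
    obtain ⟨u', hu'⟩ : ∃ u', HasDerivAt u u' t := ⟨_, by simpa using hu.hasDerivAt 1 t⟩
    have deriv_u_mul : u' * ψ t z = Complex.I * gradient (F t) (u t * ψ t z) :=
      (hu'.mul_const (ψ t z)).unique (hu.hasDerivAt (ψ t z) t)
    have conj_u_mul_u : conj (u t) * (u t * ψ t z) = ψ t z := by
      rw [← mul_assoc, Complex.conj_mul', norm_u]
      simp
    have gradient_G : HasGradientAt (fun w => G t (conj (u t) * w))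
        (u t * gradient (G t) (ψ t z)) (u t * ψ t z) := by
      simpa only [conj_u_mul_u, Complex.conj_conj] using
        hasGradientAt_comp_complex_mul (hG t (conj (u t) * (u t * ψ t z))).hasGradientAt
    rw [(hasGradientAt_add (hF t _).hasGradientAt gradient_G).gradient]
    refine (hu'.mul (hψ.hasDerivAt z t)).congr_deriv ?_
    rw [deriv_u_mul]
    ring

/-- The rotation of `ℂ` about `c` through the angle `-2πat`, as a flow in the time `t`. -/
noncomputable def rotationFlow (a : ℝ) (c : ℂ) (t : ℝ) (z : ℂ) : ℂ :=
  Complex.exp (-(2 * (π : ℂ) * Complex.I) * a * t) * (z - c) + c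

theorem rotationFlow_intCast_one (n : ℤ) (c : ℂ) : rotationFlow n c 1 = id := by
  have exp_eq_one : Complex.exp (-(2 * (π : ℂ) * Complex.I) * n) = 1 :=
    Complex.exp_eq_one_iff.mpr ⟨-n, by push_cast; ring⟩
  funext z
  simp only [rotationFlow, Complex.ofReal_intCast, Complex.ofReal_one, mul_one, exp_eq_one,
    one_mul, sub_add_cancel, id_eq]

theorem isHamiltonianFlow_rotationFlow (a : ℝ) (c : ℂ) :
    IsHamiltonianFlow (fun _ z => -π * a * ‖z - c‖ ^ 2) (rotationFlow a c) where
  zero_eq_id := by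
    funext z
    simp [rotationFlow]
  hasDerivAt z t := by
    rw [(hasGradientAt_const_mul_norm_sub_sq (-π * a) c _).gradient]
    have exponent_deriv : HasDerivAt (fun s : ℝ => -(2 * (π : ℂ) * Complex.I) * a * s)
        (-(2 * (π : ℂ) * Complex.I) * a) t := by
      simpa using Complex.ofRealCLM.hasDerivAt.const_mul (-(2 * (π : ℂ) * Complex.I) * a)
    refine ((exponent_deriv.cexp.mul_const (z - c)).add_const c).congr_deriv ?_
    rw [rotationFlow, Complex.real_smul]
    push_cast
    ring

theorem isHamiltonianFlow_rotationFlow_rotationFlow (a b : ℝ) (c : ℂ) :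
    IsHamiltonianFlow
      (fun t z => -π * (a * ‖z‖ ^ 2 +
        b * ‖Complex.exp ((2 * (π : ℂ) * Complex.I) * a * t) * z - c‖ ^ 2))
      fun t z => rotationFlow a 0 t (rotationFlow b c t z) := by
  set u : ℝ → ℂ := fun t => Complex.exp (-(2 * (π : ℂ) * Complex.I) * a * t) with hu
  have rotation_eq_mul : rotationFlow a 0 = fun t z => u t * z := by
    funext t z
    rw [rotationFlow, sub_zero, add_zero]
  have norm_u (t : ℝ) : ‖u t‖ = 1 := by
    simp [hu, Complex.norm_exp]
  have conj_u (t : ℝ) : conj (u t) = Complex.exp ((2 * (π : ℂ) * Complex.I) * a * t) := by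
    simp [hu, ← Complex.exp_conj, Complex.conj_ofNat]
  have flow_u := isHamiltonianFlow_rotationFlow a 0
  rw [rotation_eq_mul] at flow_u ⊢
  have composite := flow_u.unitary_mul (isHamiltonianFlow_rotationFlow b c) norm_u
    (fun _ => ((differentiable_id.sub_const 0).norm_sq ℝ).const_mul _)
    (fun _ => ((differentiable_id.sub_const c).norm_sq ℝ).const_mul _)
  simpa only [conj_u, sub_zero, mul_assoc, ← mul_add] using composite

theorem stmt_9_general (a b : ℤ) (lam : ℂ)
    (phibar : ℝ → ℂ → ℂ)
    (hphibar : ∀ (t : ℝ) (z : ℂ), phibar t z =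
      Complex.exp (-(2 * (π : ℂ) * Complex.I) * (a : ℂ) * (t : ℂ)) *
        (Complex.exp (-(2 * (π : ℂ) * Complex.I) * (b : ℂ) * (t : ℂ)) * (z - lam) + lam))
    (Hbar : ℝ → ℂ → ℝ)
    (hHbar : ∀ (t : ℝ) (z : ℂ), Hbar t z =
      -π * ((a : ℝ) * ‖z‖ ^ 2 +
        (b : ℝ) * ‖Complex.exp ((2 * (π : ℂ) * Complex.I) * (a : ℂ) * (t : ℂ)) * z - lam‖ ^ 2)) :
    phibar 0 = id ∧ phibar 1 = id ∧
    (∀ (z : ℂ) (t : ℝ),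
      HasDerivAt (fun s => phibar s z) (Complex.I * gradient (Hbar t) (phibar t z)) t) := by
  have phibar_eq : phibar = fun t z => rotationFlow a 0 t (rotationFlow b lam t z) := by
    funext t z
    simp only [hphibar, rotationFlow, Complex.ofReal_intCast, sub_zero, add_zero]
  have flow : IsHamiltonianFlow Hbar phibar := by
    rw [phibar_eq, show Hbar = _ from funext₂ hHbar]
    exact mod_cast isHamiltonianFlow_rotationFlow_rotationFlow a b lam
  have phibar_one : phibar 1 = id := by
    funext z
    simp only [phibar_eq, rotationFlow_intCast_one, id_eq]
  exact ⟨flow.zero_eq_id, phibar_one, flow.hasDerivAt⟩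

/-- with `a, b` positive integers and `λ ∈ ℂ`, the loop
`φ̄ t z = exp(−2πi a t)(exp(−2πi b t)(z − λ) + λ)` is based at the identity (`φ̄ 0 = φ̄ 1 = id`)
and is the Hamiltonian flow of `H̄ t z = −π (a|z|² + b|exp(2πi a t) z − λ|²)`. -/
theorem stmt_9 (a b : ℕ) (ha : 0 < a) (hb : 0 < b) (lam : ℂ)
    (phibar : ℝ → ℂ → ℂ)
    (hphibar : ∀ (t : ℝ) (z : ℂ), phibar t z =
      Complex.exp (-(2 * (π : ℂ) * Complex.I) * (a : ℂ) * (t : ℂ)) *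
        (Complex.exp (-(2 * (π : ℂ) * Complex.I) * (b : ℂ) * (t : ℂ)) * (z - lam) + lam))
    (Hbar : ℝ → ℂ → ℝ)
    (hHbar : ∀ (t : ℝ) (z : ℂ), Hbar t z =
      -π * ((a : ℝ) * ‖z‖ ^ 2 +
        (b : ℝ) * ‖Complex.exp ((2 * (π : ℂ) * Complex.I) * (a : ℂ) * (t : ℂ)) * z - lam‖ ^ 2)) :
    phibar 0 = id ∧ phibar 1 = id ∧
    (∀ (z : ℂ) (t : ℝ),
      HasDerivAt (fun s => phibar s z) (Complex.I * gradient (Hbar t) (phibar t z)) t) :=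
  stmt_9_general a b lam phibar (by simpa using hphibar) Hbar (by simpa using hHbar)
end

section
/- Let k ≥ 2 be an integer and let λ = (λ₁, …, λ_{k−1}) ∈ ℂ^{k−1}. Let φ t z = exp(−2πi·t)·z and β_μ z = z + μ. Define the loop φ̄ : ℝ → ℂ → ℂ as the composition φ̄ t = φ t ∘ β_{λ_{k−1}} ∘ φ t ∘ β_{λ_{k−2}} ∘ ⋯ ∘ φ t ∘ β_{λ₁} ∘ φ t ∘ β_{−(λ₁+⋯+λ_{k−1})}. Define w₀(t, z) = z and w_m(t, z) = exp(2πi·t)·w_{m−1}(t, z) − λ_{k−m} for 1 ≤ m ≤ k−1, and set H̄ t z = −π·Σ_{m=0}^{k−1} |w_m(t, z)|². Then: (i) φ̄ 0 = id and φ̄ 1 = id; (ii) when λ = 0, φ̄ t z = exp(−2πi·k·t)·z; and (iii) φ̄ is a Hamiltonian flow of H̄, i.e. for every z ∈ ℂ and t ∈ ℝ the curve s ↦ φ̄ s z has derivative Complex.I * ∇(H̄ t) (φ̄ t z) at time t. -/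
open Real

/-- `Fseq k λ t m` is the composition `φ t ∘ β_{λ_m} ∘ φ t ∘ ⋯ ∘ β_{λ₁} ∘ φ t`
(with `m + 1` factors of the rotation `φ t z = exp(−2πi t) z`, interleaved with the
translations `β_{λ_j} z = z + λ_j`).  Here `λ_j = lam ⟨j − 1, _⟩` for `1 ≤ j ≤ k − 1`. -/
noncomputable def Fseq (k : ℕ) (lam : Fin (k - 1) → ℂ) (t : ℝ) : ℕ → ℂ → ℂ
  | 0, z => Complex.exp (-(2 * (π : ℂ) * Complex.I) * (t : ℂ)) * z
  | m + 1, z => Complex.exp (-(2 * (π : ℂ) * Complex.I) * (t : ℂ)) *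
      (Fseq k lam t m z + if h : m < k - 1 then lam ⟨m, h⟩ else 0)

/-- The loop `φ̄ t = φ t ∘ β_{λ_{k−1}} ∘ φ t ∘ ⋯ ∘ β_{λ₁} ∘ φ t ∘ β_{−(λ₁+⋯+λ_{k−1})}`. -/
noncomputable def phibar (k : ℕ) (lam : Fin (k - 1) → ℂ) (t : ℝ) (z : ℂ) : ℂ :=
  Fseq k lam t (k - 1) (z - ∑ j, lam j)

/-- `wseq k λ t z m = w_m(t, z)`, where `w₀(t,z) = z` and
`w_m(t,z) = exp(2πi t) w_{m−1}(t,z) − λ_{k−m}`. -/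
noncomputable def wseq (k : ℕ) (lam : Fin (k - 1) → ℂ) (t : ℝ) (z : ℂ) : ℕ → ℂ
  | 0 => z
  | m + 1 => Complex.exp ((2 * (π : ℂ) * Complex.I) * (t : ℂ)) * wseq k lam t z m -
      if h : k - (m + 1) - 1 < k - 1 then lam ⟨k - (m + 1) - 1, h⟩ else 0

/-- The Hamiltonian `H̄ t z = −π Σ_{m=0}^{k−1} |w_m(t, z)|²`. -/
noncomputable def Hbar (k : ℕ) (lam : Fin (k - 1) → ℂ) (t : ℝ) (z : ℂ) : ℝ :=
  -π * ∑ m ∈ Finset.range k, ‖wseq k lam t z m‖ ^ 2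

/-! Both sides of Hamilton's equation are multiples of the sum `∑ j ≤ m, e^{-2πijt} F_{m-j}`,
where `F_m` is the partial composition `Fseq k lam t m` and finally `m = k - 1`.  By the product
rule, `-2πi` times this sum is the time derivative of `F_m`: each of its terms comes from
differentiating one of the rotations.  On the other hand `w_m` undoes, one rotation and translation
at a time, the composition `F_{k-1}`, so that `w_m ∘ F_{k-1} = F_{k-1-m}`; since `w_m` is
holomorphic in `z` with derivative `e^{2πimt}`, the gradient of `|w_m|²` is `2 e^{-2πimt} w_m`, and
the gradient of `H̄` along the flow is `-2π` times the same sum. -/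

open scoped FourierTransform ComplexConjugate

section Gradient

variable {𝕜 F : Type*} [RCLike 𝕜] [NormedAddCommGroup F] [InnerProductSpace 𝕜 F] [CompleteSpace F]

lemma hasGradientAt_fun_sum {ι : Type*} {s : Finset ι} {f : ι → F → 𝕜} {f' : ι → F} {x : F}
    (hf : ∀ i ∈ s, HasGradientAt (f i) (f' i) x) :
    HasGradientAt (fun y => ∑ i ∈ s, f i y) (∑ i ∈ s, f' i) x := by
  rw [hasGradientAt_iff_hasFDerivAt, map_sum]
  exact HasFDerivAt.fun_sum fun i hi => (hf i hi).hasFDerivAt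

lemma hasGradientAt_const_mul {f : F → 𝕜} {f' x : F} (c : 𝕜) (hf : HasGradientAt f f' x) :
    HasGradientAt (fun y => c * f y) (conj c • f') x := by
  rw [hasGradientAt_iff_hasFDerivAt, map_smulₛₗ, RCLike.conj_conj]
  exact hf.hasFDerivAt.const_mul c

lemma hasGradientAt_norm_sq_of_hasDerivAt {f : ℂ → ℂ} {f' z : ℂ} (hf : HasDerivAt f f' z) :
    HasGradientAt (fun w => ‖f w‖ ^ 2) (2 * (conj f' * f z)) z := by
  rw [hasGradientAt_iff_hasFDerivAt]
  refine hf.complexToReal_fderiv.norm_sq.congr_fderiv ?_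
  ext v
  simp only [smul_apply, ContinuousLinearMap.comp_apply, innerSL_apply_apply,
    InnerProductSpace.toDual_apply_apply, one_apply_eq_self, Complex.inner, nsmul_eq_mul,
    smul_eq_mul, map_mul, Complex.conj_conj, Complex.conj_ofNat]
  rw [← Complex.re_ofReal_mul]
  push_cast
  ring_nf

end Gradient

section FourierChar

lemma exp_two_pi_I_mul_eq_fourierChar (t : ℝ) : Complex.exp (2 * π * Complex.I * t) = 𝐞 t := by
  rw [Real.fourierChar_apply]
  push_cast
  ring_nf

lemma exp_neg_two_pi_I_mul_eq_fourierChar (t : ℝ) :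
    Complex.exp (-(2 * π * Complex.I) * t) = 𝐞 (-t) := by
  rw [← exp_two_pi_I_mul_eq_fourierChar, Complex.ofReal_neg, neg_mul_comm]

lemma fourierChar_intCast (n : ℤ) : 𝐞 (n : ℝ) = 1 := by
  rw [Real.fourierChar_apply', mul_comm, Circle.exp_intCast_mul, Circle.exp_two_pi, one_zpow]

lemma hasDerivAt_fourierChar_neg (t : ℝ) :
    HasDerivAt (fun s : ℝ => (𝐞 (-s) : ℂ)) (-(2 * π * Complex.I) * 𝐞 (-t)) t := by
  refine ((Real.hasDerivAt_fourierChar (-t)).scomp t (hasDerivAt_neg t)).congr_deriv ?_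
  rw [neg_one_smul, neg_mul]

end FourierChar

/-- The sequence `λ₁, …, λₙ` extended by zero, indexed from `0`: its value at `m` is `λ_{m+1}`.
It turns the case distinctions in `Fseq` and `wseq` into a single function on `ℕ`. -/
def extendByZero {M : Type*} [Zero M] {n : ℕ} (lam : Fin n → M) (m : ℕ) : M :=
  if h : m < n then lam ⟨m, h⟩ else 0

lemma sum_range_extendByZero {M : Type*} [AddCommMonoid M] {n : ℕ} (lam : Fin n → M) :
    ∑ m ∈ Finset.range n, extendByZero lam m = ∑ j, lam j := by
  simp [← Fin.sum_univ_eq_sum_range, extendByZero]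

lemma extendByZero_zero {M : Type*} [Zero M] (n m : ℕ) :
    extendByZero (0 : Fin n → M) m = 0 := by
  simp [extendByZero]

section Flow

variable (k : ℕ) (lam : Fin (k - 1) → ℂ) (t : ℝ) (z : ℂ)

lemma Fseq_zero : Fseq k lam t 0 z = 𝐞 (-t) * z := by
  rw [Fseq, exp_neg_two_pi_I_mul_eq_fourierChar]

lemma Fseq_succ (m : ℕ) :
    Fseq k lam t (m + 1) z = 𝐞 (-t) * (Fseq k lam t m z + extendByZero lam m) := by
  rw [Fseq, exp_neg_two_pi_I_mul_eq_fourierChar, extendByZero]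

lemma wseq_succ (m : ℕ) :
    wseq k lam t z (m + 1) =
      𝐞 t * wseq k lam t z m - extendByZero lam (k - (m + 1) - 1) := by
  rw [wseq, exp_two_pi_I_mul_eq_fourierChar, extendByZero]

lemma Fseq_intCast (n : ℤ) (m : ℕ) :
    Fseq k lam n m z = z + ∑ j ∈ Finset.range m, extendByZero lam j := by
  have h_rot : (𝐞 (-(n : ℝ)) : ℂ) = 1 := by
    rw [← Int.cast_neg, fourierChar_intCast, Circle.coe_one]
  induction m with
  | zero => simp [Fseq_zero, h_rot]
  | succ m ih => rw [Fseq_succ, ih, h_rot, one_mul, Finset.sum_range_succ, add_assoc]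

lemma phibar_intCast (n : ℤ) : phibar k lam n z = z := by
  rw [phibar, Fseq_intCast, sum_range_extendByZero, sub_add_cancel]

lemma Fseq_zero_translations (m : ℕ) : Fseq k 0 t m z = 𝐞 (-t) ^ (m + 1) * z := by
  induction m with
  | zero => rw [Fseq_zero, zero_add, pow_one]
  | succ m ih => rw [Fseq_succ, ih, extendByZero_zero, add_zero, pow_succ' _ (m + 1), mul_assoc]

lemma phibar_zero_translations (hk : k ≠ 0) : phibar k 0 t z = 𝐞 (-t) ^ k * z := by
  simp only [phibar, Fseq_zero_translations, Nat.sub_one_add_one hk, Pi.zero_apply,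
    Finset.sum_const_zero, sub_zero]

lemma hasDerivAt_Fseq (m : ℕ) :
    HasDerivAt (fun s => Fseq k lam s m z)
      (-(2 * π * Complex.I) *
        ∑ j ∈ Finset.range (m + 1), 𝐞 (-t) ^ j * Fseq k lam t (m - j) z) t := by
  induction m with
  | zero =>
    simpa [Fseq_zero, mul_assoc] using (hasDerivAt_fourierChar_neg t).mul_const z
  | succ m ih =>
    simp only [Fseq_succ k lam _ z m]
    refine ((hasDerivAt_fourierChar_neg t).mul (ih.add_const _)).congr_deriv ?_
    have h_sum : ∑ j ∈ Finset.range (m + 2), (𝐞 (-t) : ℂ) ^ j * Fseq k lam t (m + 1 - j) z =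
        𝐞 (-t) * ∑ j ∈ Finset.range (m + 1), (𝐞 (-t) : ℂ) ^ j * Fseq k lam t (m - j) z +
          𝐞 (-t) * (Fseq k lam t m z + extendByZero lam m) := by
      simp only [Finset.sum_range_succ' _ (m + 1), Nat.add_sub_add_right, pow_succ', mul_assoc,
        Finset.mul_sum, pow_zero, one_mul, Nat.sub_zero, Fseq_succ]
    rw [h_sum]
    ring

lemma wseq_Fseq {m : ℕ} (hm : m ≤ k - 1) :
    wseq k lam t (Fseq k lam t (k - 1) z) m = Fseq k lam t (k - 1 - m) z := by
  induction m with
  | zero => rfl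
  | succ m ih =>
    have h_step : k - 1 - m = k - 1 - (m + 1) + 1 := by lia
    have h_index : k - (m + 1) - 1 = k - 1 - (m + 1) := by lia
    have h_cancel : (𝐞 t : ℂ) * 𝐞 (-t) = 1 := by
      rw [← Circle.coe_mul, ← AddChar.map_add_eq_mul, add_neg_cancel, AddChar.map_zero_eq_one,
        Circle.coe_one]
    rw [wseq_succ, ih (by lia), h_step, Fseq_succ, h_index, ← mul_assoc, h_cancel, one_mul,
      add_sub_cancel_right]

lemma hasDerivAt_wseq (m : ℕ) :
    HasDerivAt (fun w => wseq k lam t w m) (𝐞 t ^ m) z := by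
  induction m with
  | zero => exact hasDerivAt_id z
  | succ m ih =>
    simp only [wseq_succ, pow_succ']
    exact (ih.const_mul _).sub_const _

lemma hasGradientAt_Hbar :
    HasGradientAt (Hbar k lam t)
      (-(2 * π) * ∑ m ∈ Finset.range k, 𝐞 (-t) ^ m * wseq k lam t z m) z := by
  have h_norm_sq (m : ℕ) : HasGradientAt (fun w => ‖wseq k lam t w m‖ ^ 2)
      (2 * (𝐞 (-t) ^ m * wseq k lam t z m)) z := by
    simpa only [map_pow, Circle.starRingEnd_addChar] using
      hasGradientAt_norm_sq_of_hasDerivAt (hasDerivAt_wseq k lam t z m)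
  have h_Hbar : HasGradientAt (Hbar k lam t) _ z :=
    hasGradientAt_const_mul (-π) (hasGradientAt_fun_sum fun m _ => h_norm_sq m)
  convert h_Hbar using 1
  rw [← Finset.mul_sum, conj_trivial, Complex.real_smul]
  push_cast
  ring

lemma hasDerivAt_phibar (hk : k ≠ 0) :
    HasDerivAt (fun s => phibar k lam s z)
      (Complex.I * gradient (Hbar k lam t) (phibar k lam t z)) t := by
  refine (hasDerivAt_Fseq k lam t (z - ∑ j, lam j) (k - 1)).congr_deriv ?_
  have h_along_flow : ∀ m ∈ Finset.range k,
      (𝐞 (-t) : ℂ) ^ m * wseq k lam t (phibar k lam t z) m =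
        𝐞 (-t) ^ m * Fseq k lam t (k - 1 - m) (z - ∑ j, lam j) := fun m hm => by
    rw [phibar, wseq_Fseq k lam t _ (Nat.le_sub_one_of_lt (Finset.mem_range.mp hm))]
  rw [(hasGradientAt_Hbar k lam t _).gradient, Finset.sum_congr rfl h_along_flow,
    Nat.sub_one_add_one hk]
  ring

end Flow

/-- for `k ≥ 2` and `λ ∈ ℂ^{k−1}`: (i) `φ̄ 0 = φ̄ 1 = id`;
(ii) for `λ = 0`, `φ̄ t z = exp(−2πi k t) z`; (iii) `φ̄` is a Hamiltonian flow of `H̄`. -/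
theorem stmt_11 (k : ℕ) (hk : 2 ≤ k) (lam : Fin (k - 1) → ℂ) :
    (∀ z : ℂ, phibar k lam 0 z = z) ∧ (∀ z : ℂ, phibar k lam 1 z = z) ∧
    ((∀ j, lam j = 0) → ∀ (t : ℝ) (z : ℂ),
      phibar k lam t z = Complex.exp (-(2 * (π : ℂ) * Complex.I) * ((k : ℂ) * (t : ℂ))) * z) ∧
    (∀ (z : ℂ) (t : ℝ),
      HasDerivAt (fun s => phibar k lam s z)
        (Complex.I * gradient (Hbar k lam t) (phibar k lam t z)) t) := by
  have hk₀ : k ≠ 0 := by lia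
  refine ⟨fun z => ?_, fun z => ?_, fun h_lam t z => ?_,
    fun z t => hasDerivAt_phibar k lam t z hk₀⟩
  · exact_mod_cast phibar_intCast k lam z 0
  · exact_mod_cast phibar_intCast k lam z 1
  · obtain rfl : lam = 0 := funext h_lam
    rw [phibar_zero_translations k t z hk₀, ← exp_neg_two_pi_I_mul_eq_fourierChar,
      ← Complex.exp_nat_mul, mul_left_comm]
end

section
/- Let a, b, c be positive integers, k = a + b + c, t ∈ ℝ and λ, μ ∈ ℂ. Then the function z ↦ a·|z|² + b·|exp(2πi·a·t)·z − λ|² + c·|exp(2πi·(a+b)·t)·z − exp(2πi·b·t)·λ − μ|² on ℂ attains a minimum, and its minimum value equals (a·(b+c)/k)·|λ|² + (c·(a+b)/k)·|μ|² + (2·a·c/k)·Re(exp(−2πi·b·t)·conj(λ)·μ). -/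
open Real

/-!
With `y = exp(2πi(a+b)t) z`, `p = exp(2πibt) λ` and `q = μ`, the three terms are weighted squared
distances from `y` to the points `0`, `p` and `p + q`, because rotations are isometries. A weighted
sum of squared distances is least at the centre of mass, where it equals the sum of
`wᵢ wⱼ ‖pᵢ - pⱼ‖²` over pairs, divided by the total weight.
-/

open Finset
open scoped RealInnerProductSpace

section CenterMass

variable {ι E : Type*} [NormedAddCommGroup E] [InnerProductSpace ℝ E]
  {s : Finset ι} {w : ι → ℝ}

theorem sum_mul_norm_sub_sq_eq_add (hw : ∑ i ∈ s, w i ≠ 0) (p : ι → E) (y : E) :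
    ∑ i ∈ s, w i * ‖y - p i‖ ^ 2 =
      (∑ i ∈ s, w i) * ‖y - s.centerMass w p‖ ^ 2 +
        ∑ i ∈ s, w i * ‖s.centerMass w p - p i‖ ^ 2 := by
  set g := s.centerMass w p with hg
  have sum_smul_sub_eq_zero : ∑ i ∈ s, w i • (g - p i) = 0 := by
    rw [hg, centerMass]
    simp only [smul_sub, sum_sub_distrib, ← sum_smul, smul_inv_smul₀ hw, sub_self]
  have sum_mul_inner_eq_zero : ∑ i ∈ s, w i * ⟪y - g, g - p i⟫ = 0 := by
    simp only [← real_inner_smul_right, ← inner_sum, sum_smul_sub_eq_zero, inner_zero_right]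
  calc ∑ i ∈ s, w i * ‖y - p i‖ ^ 2
      = ∑ i ∈ s, (w i * ‖y - g‖ ^ 2 + 2 * (w i * ⟪y - g, g - p i⟫) + w i * ‖g - p i‖ ^ 2) := by
        refine sum_congr rfl fun i _ ↦ ?_
        rw [← sub_add_sub_cancel y g (p i), norm_add_sq_real]
        ring
    _ = (∑ i ∈ s, w i) * ‖y - g‖ ^ 2 + ∑ i ∈ s, w i * ‖g - p i‖ ^ 2 := by
        rw [sum_add_distrib, sum_add_distrib, ← mul_sum, sum_mul_inner_eq_zero, sum_mul]
        ring

theorem sum_mul_norm_centerMass_sub_sq (hw : ∑ i ∈ s, w i ≠ 0) (p : ι → E) :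
    ∑ i ∈ s, w i * ‖s.centerMass w p - p i‖ ^ 2 =
      (∑ j ∈ s, ∑ i ∈ s, w j * w i * ‖p j - p i‖ ^ 2) / (2 * ∑ i ∈ s, w i) := by
  -- Average the decomposition of `sum_mul_norm_sub_sq_eq_add` over `y = p j` with weights `w j`.
  set W := ∑ i ∈ s, w i
  set g := s.centerMass w p
  set v := ∑ i ∈ s, w i * ‖g - p i‖ ^ 2 with hv
  have double_sum_eq : ∑ j ∈ s, ∑ i ∈ s, w j * w i * ‖p j - p i‖ ^ 2 = 2 * W * v :=
    calc ∑ j ∈ s, ∑ i ∈ s, w j * w i * ‖p j - p i‖ ^ 2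
        = ∑ j ∈ s, (W * (w j * ‖g - p j‖ ^ 2) + w j * v) := by
          refine sum_congr rfl fun j _ ↦ ?_
          simp only [mul_assoc, ← mul_sum]
          rw [sum_mul_norm_sub_sq_eq_add hw p (p j), norm_sub_rev (p j)]
          ring
      _ = 2 * W * v := by
          rw [sum_add_distrib, ← mul_sum, ← sum_mul, ← hv]
          ring
  rw [double_sum_eq, mul_div_cancel_left₀ _ (mul_ne_zero two_ne_zero hw)]

theorem isLeast_range_sum_mul_norm_sub_sq (hw : 0 < ∑ i ∈ s, w i) (p : ι → E) :
    IsLeast (Set.range fun y ↦ ∑ i ∈ s, w i * ‖y - p i‖ ^ 2)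
      ((∑ j ∈ s, ∑ i ∈ s, w j * w i * ‖p j - p i‖ ^ 2) / (2 * ∑ i ∈ s, w i)) := by
  rw [← sum_mul_norm_centerMass_sub_sq hw.ne']
  refine ⟨⟨s.centerMass w p, rfl⟩, Set.forall_mem_range.2 fun y ↦ ?_⟩
  rw [sum_mul_norm_sub_sq_eq_add hw.ne' p y]
  exact le_add_of_nonneg_left (by positivity)

end CenterMass

section ThreePoints

variable {E : Type*} [NormedAddCommGroup E] [InnerProductSpace ℝ E] {a b c : ℝ}

theorem isLeast_range_three_norm_sub_sq (hk : 0 < a + b + c) (p q : E) :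
    IsLeast (Set.range fun y : E ↦ a * ‖y‖ ^ 2 + b * ‖y - p‖ ^ 2 + c * ‖y - p - q‖ ^ 2)
      (a * (b + c) / (a + b + c) * ‖p‖ ^ 2 + c * (a + b) / (a + b + c) * ‖q‖ ^ 2 +
        2 * a * c / (a + b + c) * ⟪p, q⟫) := by
  have h := isLeast_range_sum_mul_norm_sub_sq (s := univ) (w := ![a, b, c])
    (by simpa [Fin.sum_univ_three] using hk) ![0, p, p + q]
  convert h using 1
  · simp [Fin.sum_univ_three, sub_sub]
  · simp only [Fin.sum_univ_three, Matrix.cons_val, sub_self, zero_sub, sub_zero, norm_neg,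
      norm_zero, sub_add_cancel_left, add_sub_cancel_left, norm_add_sq_real]
    field

theorem isLeast_range_three_norm_isometry_sub_sq (hk : 0 < a + b + c) (U V : E ≃ₗᵢ[ℝ] E)
    (l m : E) :
    IsLeast (Set.range fun z ↦
        a * ‖z‖ ^ 2 + b * ‖U z - l‖ ^ 2 + c * ‖V (U z) - V l - m‖ ^ 2)
      (a * (b + c) / (a + b + c) * ‖l‖ ^ 2 + c * (a + b) / (a + b + c) * ‖m‖ ^ 2 +
        2 * a * c / (a + b + c) * ⟪V l, m⟫) := by
  have h := isLeast_range_three_norm_sub_sq hk (V l) m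
  rw [← (U.trans V).surjective.range_comp] at h
  simpa only [Function.comp_def, LinearIsometryEquiv.trans_apply, ← map_sub,
    LinearIsometryEquiv.norm_map] using h

end ThreePoints

theorem stmt_13_general (a b c : ℝ) (hk : 0 < a + b + c) (t : ℝ) (lam mu : ℂ) :
    IsLeast (Set.range fun z : ℂ ↦
        a * ‖z‖ ^ 2 + b * ‖Complex.exp (2 * π * Complex.I * a * t) * z - lam‖ ^ 2 +
          c * ‖Complex.exp (2 * π * Complex.I * (a + b) * t) * z -
            Complex.exp (2 * π * Complex.I * b * t) * lam - mu‖ ^ 2)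
      (a * (b + c) / (a + b + c) * ‖lam‖ ^ 2 + c * (a + b) / (a + b + c) * ‖mu‖ ^ 2 +
        2 * a * c / (a + b + c) *
          (Complex.exp (-(2 * π * Complex.I) * b * t) * (starRingEnd ℂ) lam * mu).re) := by
  have coe_circle_exp (x : ℝ) :
      (Circle.exp (2 * π * x * t) : ℂ) = Complex.exp (2 * π * Complex.I * x * t) := by
    rw [Circle.coe_exp]
    push_cast
    ring_nf
  have exp_add_mul : Complex.exp (2 * π * Complex.I * (a + b) * t) =
      Complex.exp (2 * π * Complex.I * b * t) * Complex.exp (2 * π * Complex.I * a * t) := by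
    rw [← Complex.exp_add]
    ring_nf
  have conj_exp : (starRingEnd ℂ) (Complex.exp (2 * π * Complex.I * b * t)) =
      Complex.exp (-(2 * π * Complex.I) * b * t) := by
    simp [← Complex.exp_conj, map_ofNat]
  have h := isLeast_range_three_norm_isometry_sub_sq hk (rotation (Circle.exp (2 * π * a * t)))
    (rotation (Circle.exp (2 * π * b * t))) lam mu
  simp only [rotation_apply, coe_circle_exp, Complex.inner, map_mul, conj_exp, mul_comm mu,
    ← mul_assoc] at h
  rwa [exp_add_mul]

/-- for positive integers `a, b, c` with `k = a + b + c`, `t ∈ ℝ` and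
`λ, μ ∈ ℂ`, the function
`z ↦ a|z|² + b|exp(2πi a t) z − λ|² + c|exp(2πi(a+b)t) z − exp(2πi b t) λ − μ|²`
attains a minimum on `ℂ`, whose value is
`(a(b+c)/k)|λ|² + (c(a+b)/k)|μ|² + (2ac/k) Re(exp(−2πi b t) conj(λ) μ)`. -/
theorem stmt_13 (a b c : ℕ) (ha : 0 < a) (hb : 0 < b) (hc : 0 < c) (t : ℝ) (lam mu : ℂ) :
    ∃ z₀ : ℂ,
      (∀ z : ℂ,
        (a : ℝ) * ‖z₀‖ ^ 2 +
            (b : ℝ) * ‖Complex.exp ((2 * (π : ℂ) * Complex.I) * (a : ℂ) * (t : ℂ)) * z₀ - lam‖ ^ 2 +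
            (c : ℝ) * ‖Complex.exp ((2 * (π : ℂ) * Complex.I) * ((a : ℂ) + (b : ℂ)) * (t : ℂ)) * z₀ -
              Complex.exp ((2 * (π : ℂ) * Complex.I) * (b : ℂ) * (t : ℂ)) * lam - mu‖ ^ 2 ≤
          (a : ℝ) * ‖z‖ ^ 2 +
            (b : ℝ) * ‖Complex.exp ((2 * (π : ℂ) * Complex.I) * (a : ℂ) * (t : ℂ)) * z - lam‖ ^ 2 +
            (c : ℝ) * ‖Complex.exp ((2 * (π : ℂ) * Complex.I) * ((a : ℂ) + (b : ℂ)) * (t : ℂ)) * z -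
              Complex.exp ((2 * (π : ℂ) * Complex.I) * (b : ℂ) * (t : ℂ)) * lam - mu‖ ^ 2) ∧
      (a : ℝ) * ‖z₀‖ ^ 2 +
          (b : ℝ) * ‖Complex.exp ((2 * (π : ℂ) * Complex.I) * (a : ℂ) * (t : ℂ)) * z₀ - lam‖ ^ 2 +
          (c : ℝ) * ‖Complex.exp ((2 * (π : ℂ) * Complex.I) * ((a : ℂ) + (b : ℂ)) * (t : ℂ)) * z₀ -
            Complex.exp ((2 * (π : ℂ) * Complex.I) * (b : ℂ) * (t : ℂ)) * lam - mu‖ ^ 2 =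
        (a : ℝ) * ((b : ℝ) + (c : ℝ)) / ((a : ℝ) + (b : ℝ) + (c : ℝ)) * ‖lam‖ ^ 2 +
          (c : ℝ) * ((a : ℝ) + (b : ℝ)) / ((a : ℝ) + (b : ℝ) + (c : ℝ)) * ‖mu‖ ^ 2 +
          2 * (a : ℝ) * (c : ℝ) / ((a : ℝ) + (b : ℝ) + (c : ℝ)) *
            (Complex.exp (-(2 * (π : ℂ) * Complex.I) * (b : ℂ) * (t : ℂ)) *
              (starRingEnd ℂ) lam * mu).re := by
  obtain ⟨⟨z₀, hz₀⟩, hmin⟩ := stmt_13_general a b c (by positivity) t lam mu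
  exact ⟨z₀, fun z ↦ hz₀.le.trans (hmin ⟨z, rfl⟩), hz₀⟩
end
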